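/- Let ω be a radial weight in D̂. Then there exists a radial weight ν such that P_ω : L^∞_ν̂ → H^∞_ν̂ is bounded if and only if ω ∈ Ď. In particular, if ω ∈ D̂ \ Ď, then for every radial weight ν the projection P_ω is not bounded from L^∞_ν̂ to H^∞_ν̂. -/

import Mathlib

open MeasureTheory Set Complex
open scoped ENNReal

noncomputable section

/-- The open unit disc in the complex plane. -/
def unitDisc : Set ℂ := Metric.ball 0 1

/-- Tail integral `ω̂(r) = ∫_r^1 ω(s) ds`. -/
def tl (ω : ℝ → ℝ) (r : ℝ) : ℝ := ∫ s in r..1, ω s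

/-- Moment `ω_x = ∫_0^1 s^x ω(s) ds` (real power in the exponent). -/
def mom (ω : ℝ → ℝ) (x : ℝ) : ℝ := ∫ s in (0:ℝ)..1, s ^ x * ω s

/-- `ω` is a radial weight: nonnegative and integrable on `[0,1)`, with positive
tail integrals. -/
def IsRadialWeight (ω : ℝ → ℝ) : Prop :=
  (∀ s ∈ Ico (0:ℝ) 1, 0 ≤ ω s) ∧ IntegrableOn ω (Ico (0:ℝ) 1) ∧
    ∀ r ∈ Ico (0:ℝ) 1, 0 < tl ω r

/-- The upper doubling class `D̂`: `sup_{0≤r<1} ω̂(r)/ω̂((1+r)/2) < ∞`. -/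
def Dhat (ω : ℝ → ℝ) : Prop :=
  ∃ C : ℝ, ∀ r ∈ Ico (0:ℝ) 1, tl ω r ≤ C * tl ω ((1 + r) / 2)

/-- The class `Ď`: there are `K > 1`, `C > 1` with `ω̂(r) ≥ C ω̂(1 - (1-r)/K)`. -/
def Dcheck (ω : ℝ → ℝ) : Prop :=
  ∃ K C : ℝ, 1 < K ∧ 1 < C ∧ ∀ r ∈ Ico (0:ℝ) 1, C * tl ω (1 - (1 - r) / K) ≤ tl ω r

/-- The class `D = D̂ ∩ Ď`. -/
def DD (ω : ℝ → ℝ) : Prop := Dhat ω ∧ Dcheck ω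

/-- The Bergman reproducing kernel `B^ω_z(ζ) = Σ_n (conj z · ζ)^n / (2 ω_{2n+1})`. -/
def bKer (ω : ℝ → ℝ) (z ζ : ℂ) : ℂ :=
  ∑' n : ℕ, (starRingEnd ℂ z * ζ) ^ n / ((2 * mom ω (2 * (n : ℝ) + 1) : ℝ) : ℂ)

/-- The integrand of the Bergman projection. -/
def bInt (ω : ℝ → ℝ) (f : ℂ → ℂ) (z ζ : ℂ) : ℂ :=
  f ζ * starRingEnd ℂ (bKer ω z ζ) * ((ω ‖ζ‖ : ℝ) : ℂ)

/-- The Bergman projection `P_ω f(z) = ∫_𝔻 f(ζ) conj(B^ω_z(ζ)) ω(ζ) dA(ζ)`,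
where `dA` is normalized area measure `dx dy / π`. -/
def bProj (ω : ℝ → ℝ) (f : ℂ → ℂ) (z : ℂ) : ℂ :=
  (Real.pi : ℂ)⁻¹ * ∫ ζ in unitDisc, bInt ω f z ζ

/-- The weighted sup-norm `ess sup_{z ∈ 𝔻} |f(z)| v(|z|)`, valued in `ℝ≥0∞`. -/
def wSup (v : ℝ → ℝ) (f : ℂ → ℂ) : ℝ≥0∞ :=
  essSup (fun z => ENNReal.ofReal (‖f z‖ * v ‖z‖)) (volume.restrict unitDisc)

/-- `P_ω : L^∞_v → H^∞_v` is bounded: there is `C > 0` so that for every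
`f ∈ L^∞_v` the defining integral converges absolutely at every point of `𝔻`,
`P_ω f` is analytic on `𝔻`, and `‖P_ω f‖_{L^∞_v} ≤ C ‖f‖_{L^∞_v}`. -/
def ProjBddH (ω v : ℝ → ℝ) : Prop :=
  ∃ C : ℝ, 0 < C ∧ ∀ f : ℂ → ℂ,
    AEStronglyMeasurable f (volume.restrict unitDisc) → wSup v f < ⊤ →
    (∀ z ∈ unitDisc, IntegrableOn (bInt ω f z) unitDisc) ∧
    DifferentiableOn ℂ (bProj ω f) unitDisc ∧
    wSup v (bProj ω f) ≤ ENNReal.ofReal C * wSup v f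

/-- `P_ω : L^∞_v → B^∞_v` is bounded: there is `C > 0` so that for every
`f ∈ L^∞_v` the defining integral converges absolutely at every point of `𝔻`,
`P_ω f` is analytic on `𝔻`, and `‖P_ω f‖_{B^∞_v} ≤ C ‖f‖_{L^∞_v}`. -/
def ProjBddB (ω v : ℝ → ℝ) : Prop :=
  ∃ C : ℝ, 0 < C ∧ ∀ f : ℂ → ℂ,
    AEStronglyMeasurable f (volume.restrict unitDisc) → wSup v f < ⊤ →
    (∀ z ∈ unitDisc, IntegrableOn (bInt ω f z) unitDisc) ∧
    DifferentiableOn ℂ (bProj ω f) unitDisc ∧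
    ∀ z ∈ unitDisc,
      ENNReal.ofReal ((1 - ‖z‖) * v ‖z‖ * ‖deriv (bProj ω f) z‖) ≤
        ENNReal.ofReal C * wSup v f

/-- The moment condition `sup_{x ≥ 0} (ν_x / ω_{2x}) (ω/ν̂)_x < ∞`. -/
def MomCond (ω ν : ℝ → ℝ) : Prop :=
  ∃ C : ℝ, ∀ x : ℝ, 0 ≤ x →
    mom ν x / mom ω (2 * x) * mom (fun s => ω s / tl ν s) x ≤ C

/-- The tail condition `sup_{0 ≤ r < 1} (ν̂(r)/ω̂(r)) ∫_r^1 ω(s)/ν̂(s) ds < ∞`. -/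
def TailCond (ω ν : ℝ → ℝ) : Prop :=
  ∃ C : ℝ, ∀ r ∈ Ico (0:ℝ) 1, tl ν r / tl ω r * tl (fun s => ω s / tl ν s) r ≤ C

/-!
Suppose `ω ∈ D̂ ∩ Ď`. The kernel derivative at `w = q e^{iθ}` is `(1 - w)⁻¹` times a power series
whose coefficients are controlled, thanks to `D̂`, by the Taylor coefficients of the kernel. The
inequality `2 |uv| ≤ H⁻¹ |u|² + H |v|²` and Parseval's identity on circles then bound its angular
`L¹` norm by a multiple of `1 / ((1 - |q|) ω̂(q))`. For small `ε > 0`, the class `Ď` makes the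
integral of `ω(s) (1 - s)^(-ε)` over `[r, 1)` comparable to `ω̂(r) (1 - r)^(-ε)`. Hence
`|f| ≤ (1 - |ζ|)^(-ε)` forces `|(P_ω f)'(z)| ≲ (1 - |z|)^(-ε - 1)`, and integrating along radii
shows that `ν̂(r) = (1 - r)^ε` works.

Conversely, if `P_ω` is bounded, apply it to `arg ζ / ν̂(ζ)`. The sawtooth `arg` has angular Fourier
coefficients of size `1 / n` with alternating phases, so at `z = -r` all terms of the series of
`P_ω f` have the same phase. Boundedness gives `ω̂(r) ∑ r^(2n+1) / (n ω_{2n+1}) ≲ 1`. Restrict the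
sum to `M ≤ n < 2^j M` and take `1 - r ≈ 1 / (2^j M)`: since `ω_{2n+1} ≲ ω̂(1 - 1/M)` by `D̂`, the
harmonic sum yields `j ω̂(1 - 2^(-j) / (4M)) ≲ ω̂(1 - 1/M)`, which is `Ď` once `j` is large.
-/

/-! ### Moments and tail integrals of radial weights -/

namespace IsRadialWeight

variable {ω : ℝ → ℝ}

theorem nonneg (hω : IsRadialWeight ω) {s : ℝ} (hs : s ∈ Ico (0 : ℝ) 1) : 0 ≤ ω s :=
  hω.1 s hs

theorem tl_pos (hω : IsRadialWeight ω) {r : ℝ} (hr : r ∈ Ico (0 : ℝ) 1) : 0 < tl ω r :=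
  hω.2.2 r hr

theorem integrableOn_Icc (hω : IsRadialWeight ω) : IntegrableOn ω (Icc 0 1) :=
  (integrableOn_Icc_iff_integrableOn_Ico (by finiteness)).2 hω.2.1

theorem intervalIntegrable (hω : IsRadialWeight ω) {a b : ℝ} (ha : a ∈ Icc (0 : ℝ) 1)
    (hb : b ∈ Icc (0 : ℝ) 1) : IntervalIntegrable ω volume a b :=
  (hω.integrableOn_Icc.mono_set (uIcc_subset_Icc ha hb)).intervalIntegrable

theorem intervalIntegrable_mul (hω : IsRadialWeight ω) {φ : ℝ → ℝ} (hφ : Continuous φ) {a b : ℝ}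
    (ha : a ∈ Icc (0 : ℝ) 1) (hb : b ∈ Icc (0 : ℝ) 1) :
    IntervalIntegrable (fun s => φ s * ω s) volume a b :=
  (hω.intervalIntegrable ha hb).continuousOn_mul hφ.continuousOn

theorem integral_mul_mono (hω : IsRadialWeight ω) {φ ψ : ℝ → ℝ} (hφ : Continuous φ)
    (hψ : Continuous ψ) {a b : ℝ} (ha : 0 ≤ a) (hab : a ≤ b) (hb : b ≤ 1)
    (h : ∀ s ∈ Ioo a b, φ s ≤ ψ s) : ∫ s in a..b, φ s * ω s ≤ ∫ s in a..b, ψ s * ω s := by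
  have ha' : a ∈ Icc (0 : ℝ) 1 := ⟨ha, hab.trans hb⟩
  have hb' : b ∈ Icc (0 : ℝ) 1 := ⟨ha.trans hab, hb⟩
  exact intervalIntegral.integral_mono_on_of_le_Ioo hab (hω.intervalIntegrable_mul hφ ha' hb')
    (hω.intervalIntegrable_mul hψ ha' hb') fun s hs =>
      mul_le_mul_of_nonneg_right (h s hs) (hω.nonneg ⟨ha.trans hs.1.le, hs.2.trans_le hb⟩)

theorem integral_mul_nonneg (hω : IsRadialWeight ω) {φ : ℝ → ℝ} (hφ : Continuous φ) {a b : ℝ}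
    (ha : 0 ≤ a) (hab : a ≤ b) (hb : b ≤ 1) (h : ∀ s ∈ Ioo a b, 0 ≤ φ s) :
    0 ≤ ∫ s in a..b, φ s * ω s := by
  simpa only [zero_mul, intervalIntegral.integral_zero] using
    hω.integral_mul_mono continuous_const hφ ha hab hb h

theorem tl_nonneg (hω : IsRadialWeight ω) {r : ℝ} (hr : r ∈ Icc (0 : ℝ) 1) : 0 ≤ tl ω r := by
  simpa only [tl, one_mul] using
    hω.integral_mul_nonneg (φ := fun _ => 1) continuous_const hr.1 hr.2 le_rfl
      fun _ _ => zero_le_one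

theorem tl_antitoneOn (hω : IsRadialWeight ω) : AntitoneOn (tl ω) (Icc 0 1) := by
  intro a ha b hb hab
  have hsplit := intervalIntegral.integral_add_adjacent_intervals
    (hω.intervalIntegrable ha hb) (hω.intervalIntegrable hb ⟨zero_le_one, le_rfl⟩)
  have hnonneg : 0 ≤ ∫ s in a..b, ω s := by
    simpa only [one_mul] using
      hω.integral_mul_nonneg (φ := fun _ => 1) continuous_const ha.1 hab hb.2 fun _ _ => zero_le_one
  rw [tl, tl, ← hsplit]
  exact le_add_of_nonneg_left hnonneg

theorem continuousOn_tl (hω : IsRadialWeight ω) : ContinuousOn (tl ω) (Icc 0 1) := by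
  have h := intervalIntegral.continuousOn_primitive_interval_left (a := 0) (b := 1)
    (by simpa only [uIcc_of_le zero_le_one] using hω.integrableOn_Icc)
  rwa [uIcc_of_le zero_le_one] at h

theorem mom_eq_add (hω : IsRadialWeight ω) {x t : ℝ} (hx : 0 ≤ x) (ht : t ∈ Icc (0 : ℝ) 1) :
    mom ω x = (∫ s in 0..t, s ^ x * ω s) + ∫ s in t..1, s ^ x * ω s :=
  (intervalIntegral.integral_add_adjacent_intervals
    (hω.intervalIntegrable_mul (Real.continuous_rpow_const hx) ⟨le_rfl, zero_le_one⟩ ht)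
    (hω.intervalIntegrable_mul (Real.continuous_rpow_const hx) ht ⟨zero_le_one, le_rfl⟩)).symm

theorem rpow_mul_tl_le_mom (hω : IsRadialWeight ω) {x t : ℝ} (hx : 0 ≤ x)
    (ht : t ∈ Icc (0 : ℝ) 1) : t ^ x * tl ω t ≤ mom ω x := by
  have hhead : 0 ≤ ∫ s in 0..t, s ^ x * ω s :=
    hω.integral_mul_nonneg (Real.continuous_rpow_const hx) le_rfl ht.1 ht.2 fun s hs =>
      Real.rpow_nonneg hs.1.le x
  have htail : ∫ s in t..1, t ^ x * ω s ≤ ∫ s in t..1, s ^ x * ω s :=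
    hω.integral_mul_mono continuous_const (Real.continuous_rpow_const hx) ht.1 ht.2 le_rfl
      fun s hs => Real.rpow_le_rpow ht.1 hs.1.le hx
  rw [intervalIntegral.integral_const_mul] at htail
  rw [hω.mom_eq_add hx ht]
  exact htail.trans (le_add_of_nonneg_left hhead)

theorem mom_pos (hω : IsRadialWeight ω) {x : ℝ} (hx : 0 ≤ x) : 0 < mom ω x :=
  (mul_pos (by positivity) (hω.tl_pos (r := 1 / 2) (by norm_num))).trans_le
    (hω.rpow_mul_tl_le_mom hx (t := 1 / 2) (by norm_num))

theorem mom_le_mom (hω : IsRadialWeight ω) {x y : ℝ} (hx : 0 ≤ x) (hxy : x ≤ y) :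
    mom ω y ≤ mom ω x :=
  hω.integral_mul_mono (Real.continuous_rpow_const (hx.trans hxy)) (Real.continuous_rpow_const hx)
    le_rfl zero_le_one le_rfl fun _ hs => Real.rpow_le_rpow_of_exponent_ge hs.1 hs.2.le hxy

theorem mom_le_tl_zero (hω : IsRadialWeight ω) {x : ℝ} (hx : 0 ≤ x) : mom ω x ≤ tl ω 0 := by
  simpa only [mom, tl, Real.rpow_zero, one_mul] using hω.mom_le_mom le_rfl hx

theorem mom_two_mul_le (hω : IsRadialWeight ω) {x t : ℝ} (hx : 0 ≤ x) (ht : t ∈ Icc (0 : ℝ) 1) :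
    mom ω (2 * x) ≤ t ^ x * mom ω x + tl ω t := by
  have hcont := Real.continuous_rpow_const hx
  have hcont' := Real.continuous_rpow_const (mul_nonneg zero_le_two hx)
  have hhead : ∫ s in 0..t, s ^ (2 * x) * ω s ≤ t ^ x * ∫ s in 0..t, s ^ x * ω s := by
    rw [← intervalIntegral.integral_const_mul]
    simp only [← mul_assoc]
    refine hω.integral_mul_mono hcont' (continuous_const.mul hcont) le_rfl ht.1 ht.2 fun s hs => ?_
    rw [two_mul, Real.rpow_add hs.1]
    exact mul_le_mul_of_nonneg_right (Real.rpow_le_rpow hs.1.le hs.2.le hx)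
      (Real.rpow_nonneg hs.1.le x)
  have htail : ∫ s in t..1, s ^ (2 * x) * ω s ≤ ∫ s in t..1, 1 * ω s :=
    hω.integral_mul_mono hcont' continuous_const ht.1 ht.2 le_rfl fun s hs =>
      Real.rpow_le_one (ht.1.trans hs.1.le) hs.2.le (by positivity)
  have hrest : 0 ≤ ∫ s in t..1, s ^ x * ω s :=
    hω.integral_mul_nonneg hcont ht.1 ht.2 le_rfl fun s hs =>
      Real.rpow_nonneg (ht.1.trans hs.1.le) x
  simp only [one_mul] at htail
  rw [hω.mom_eq_add (by positivity) ht, hω.mom_eq_add hx ht, mul_add]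
  have := mul_nonneg (Real.rpow_nonneg ht.1 x) hrest
  unfold tl
  linarith

theorem tl_le_two_mul_mom (hω : IsRadialWeight ω) {x : ℝ} (hx : 1 ≤ x) :
    tl ω (1 - 1 / (2 * x)) ≤ 2 * mom ω x := by
  have hx0 : 0 < x := zero_lt_one.trans_le hx
  have hsmall : 1 / (2 * x) ≤ 1 := (div_le_one (by positivity)).2 (by linarith)
  have ht : 1 - 1 / (2 * x) ∈ Icc (0 : ℝ) 1 :=
    ⟨by linarith, sub_le_self 1 (by positivity)⟩
  have hbernoulli : 1 / 2 ≤ (1 - 1 / (2 * x)) ^ x := by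
    have h := one_add_mul_self_le_rpow_one_add (s := -(1 / (2 * x))) (by linarith) hx
    have hval : 1 + x * -(1 / (2 * x)) = 1 / 2 := by field_simp; norm_num
    rwa [hval, ← sub_eq_add_neg] at h
  have hmom := hω.rpow_mul_tl_le_mom hx0.le ht
  have := mul_le_mul_of_nonneg_right hbernoulli (hω.tl_nonneg ht)
  linarith

end IsRadialWeight

/-! ### Upper doubling weights -/

theorem one_sub_div_mem_Ico {d K : ℝ} (hd : 0 < d) (hd1 : d ≤ 1) (hK : 1 ≤ K) :
    1 - d / K ∈ Ico (0 : ℝ) 1 :=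
  ⟨sub_nonneg.2 ((div_le_one (by positivity)).2 (hd1.trans hK)),
    sub_lt_self _ (div_pos hd (by positivity))⟩

theorem one_sub_div_rpow_le_exp_neg {a y : ℝ} (hy : 0 < y) (hay : a ≤ y) :
    (1 - a / y) ^ y ≤ Real.exp (-a) := by
  have hbase : 0 ≤ 1 - a / y := sub_nonneg.2 ((div_le_one hy).2 hay)
  calc (1 - a / y) ^ y ≤ Real.exp (-(a / y)) ^ y :=
        Real.rpow_le_rpow hbase (Real.one_sub_le_exp_neg _) hy.le
    _ = Real.exp (-a) := by rw [← Real.exp_mul]; congr 1; field_simp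

theorem one_sub_one_div_mem_Ico {x : ℝ} (hx : 1 ≤ x) : 1 - 1 / x ∈ Ico (0 : ℝ) 1 :=
  one_sub_div_mem_Ico one_pos le_rfl hx

namespace IsRadialWeight

variable {ω : ℝ → ℝ}

theorem exists_tl_le_of_dhat (hω : IsRadialWeight ω) (hD : Dhat ω) {K : ℝ} (hK : 1 ≤ K) :
    ∃ D : ℝ, 1 ≤ D ∧ ∀ d ∈ Ioc (0 : ℝ) 1, tl ω (1 - d) ≤ D * tl ω (1 - d / K) := by
  obtain ⟨C, hC⟩ := hD
  have hC1 : 1 ≤ C := by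
    have hpos := hω.tl_pos (r := (1 + 0) / 2) (by norm_num)
    have hanti := hω.tl_antitoneOn (a := 0) (b := (1 + 0) / 2) (by norm_num) (by norm_num)
      (by norm_num)
    exact le_of_mul_le_mul_right (by linarith [hC 0 (by norm_num)]) hpos
  have hiter (p : ℕ) {d : ℝ} (hd : d ∈ Ioc (0 : ℝ) 1) :
      tl ω (1 - d) ≤ C ^ p * tl ω (1 - d / 2 ^ p) := by
    induction p with
    | zero => simp only [pow_zero, one_mul, div_one, le_refl]
    | succ p ih =>
      have hhalf : (1 + (1 - d / 2 ^ p)) / 2 = 1 - d / 2 ^ (p + 1) := by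
        rw [pow_succ]; field_simp; ring
      have hstep := hC _ (one_sub_div_mem_Ico hd.1 hd.2 (one_le_pow₀ (n := p) one_le_two))
      rw [hhalf] at hstep
      calc tl ω (1 - d) ≤ C ^ p * tl ω (1 - d / 2 ^ p) := ih
        _ ≤ C ^ p * (C * tl ω (1 - d / 2 ^ (p + 1))) := by gcongr
        _ = C ^ (p + 1) * tl ω (1 - d / 2 ^ (p + 1)) := by ring
  obtain ⟨p, hp⟩ := pow_unbounded_of_one_lt K one_lt_two
  refine ⟨C ^ p, one_le_pow₀ hC1, fun d hd => (hiter p hd).trans ?_⟩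
  refine mul_le_mul_of_nonneg_left ?_ (by positivity)
  refine hω.tl_antitoneOn (Ico_subset_Icc_self (one_sub_div_mem_Ico hd.1 hd.2 hK))
    (Ico_subset_Icc_self (one_sub_div_mem_Ico hd.1 hd.2 (one_le_pow₀ one_le_two))) ?_
  have := hd.1.le
  gcongr

theorem exists_mom_le_on_Icc_of_dhat (hω : IsRadialWeight ω) (hD : Dhat ω) {a : ℝ} (ha : 1 ≤ a) :
    ∃ D : ℝ, 1 ≤ D ∧ ∀ x ∈ Icc 1 a, mom ω x ≤ D * tl ω (1 - 1 / x) := by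
  obtain ⟨D, hD1, hD⟩ := hω.exists_tl_le_of_dhat hD ha
  refine ⟨D, hD1, fun x hx => ?_⟩
  have hx0 : 0 < x := zero_lt_one.trans_le hx.1
  have htl : tl ω (1 - 1 / a) ≤ tl ω (1 - 1 / x) :=
    hω.tl_antitoneOn (Ico_subset_Icc_self (one_sub_one_div_mem_Ico hx.1))
      (Ico_subset_Icc_self (one_sub_one_div_mem_Ico ha))
      (sub_le_sub_left (one_div_le_one_div_of_le hx0 hx.2) 1)
  have hzero := hD 1 (by norm_num)
  rw [sub_self] at hzero
  calc mom ω x ≤ tl ω 0 := hω.mom_le_tl_zero hx0.le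
    _ ≤ D * tl ω (1 - 1 / a) := hzero
    _ ≤ D * tl ω (1 - 1 / x) := by gcongr

theorem exists_mom_two_mul_le_of_dhat (hω : IsRadialWeight ω) (hD : Dhat ω) :
    ∃ a D : ℝ, 1 ≤ a ∧ 1 ≤ D ∧ ∀ B y : ℝ, 0 ≤ B → a ≤ y → mom ω y ≤ B * tl ω (1 - 1 / y) →
      mom ω (2 * y) ≤ (B / 2 + D) * tl ω (1 - 1 / (2 * y)) := by
  obtain ⟨C, hC1, hC⟩ := hω.exists_tl_le_of_dhat hD one_le_two
  obtain ⟨a, ha1, ha⟩ : ∃ a : ℝ, 1 ≤ a ∧ Real.exp (-a) * C ≤ 1 / 2 := by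
    refine ⟨2 * C, by linarith, ?_⟩
    rw [Real.exp_neg, inv_mul_le_iff₀ (Real.exp_pos _)]
    linarith [Real.add_one_le_exp (2 * C)]
  obtain ⟨D, hD1, hD⟩ := hω.exists_tl_le_of_dhat hD (K := 2 * a) (by linarith)
  refine ⟨a, D, ha1, hD1, fun B y hB hy hmom => ?_⟩
  have hy0 : 0 < y := by linarith
  have ht : 1 - a / y ∈ Icc (0 : ℝ) 1 :=
    ⟨sub_nonneg.2 ((div_le_one hy0).2 hy), sub_le_self _ (by positivity)⟩
  have hnear := hC (1 / y) ⟨by positivity, (div_le_one hy0).2 (ha1.trans hy)⟩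
  have hfar := hD (a / y) ⟨by positivity, (div_le_one hy0).2 hy⟩
  rw [div_div, mul_comm y] at hnear
  rw [show a / y / (2 * a) = 1 / (2 * y) by field_simp] at hfar
  have hT : 0 ≤ tl ω (1 - 1 / (2 * y)) :=
    (hω.tl_pos (one_sub_one_div_mem_Ico (by linarith))).le
  calc mom ω (2 * y) ≤ (1 - a / y) ^ y * mom ω y + tl ω (1 - a / y) :=
        hω.mom_two_mul_le hy0.le ht
    _ ≤ Real.exp (-a) * (B * (C * tl ω (1 - 1 / (2 * y)))) + D * tl ω (1 - 1 / (2 * y)) := by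
      gcongr
      · exact (hω.mom_pos hy0.le).le
      · exact one_sub_div_rpow_le_exp_neg hy0 hy
      · exact hmom.trans (by gcongr)
    _ = Real.exp (-a) * C * (B * tl ω (1 - 1 / (2 * y))) + D * tl ω (1 - 1 / (2 * y)) := by ring
    _ ≤ 1 / 2 * (B * tl ω (1 - 1 / (2 * y))) + D * tl ω (1 - 1 / (2 * y)) := by gcongr
    _ = (B / 2 + D) * tl ω (1 - 1 / (2 * y)) := by ring

theorem exists_mom_le_of_dhat (hω : IsRadialWeight ω) (hD : Dhat ω) :
    ∃ A : ℝ, 0 < A ∧ ∀ x : ℝ, 1 ≤ x → mom ω x ≤ A * tl ω (1 - 1 / x) := by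
  obtain ⟨a, D, ha, hD1, hdouble⟩ := hω.exists_mom_two_mul_le_of_dhat hD
  obtain ⟨D', hD1', hsmall⟩ := hω.exists_mom_le_on_Icc_of_dhat hD (a := 2 * a) (by linarith)
  have htl {x : ℝ} (hx : 1 ≤ x) : 0 ≤ tl ω (1 - 1 / x) :=
    (hω.tl_pos (one_sub_one_div_mem_Ico hx)).le
  have hdyadic (j : ℕ) :
      ∀ x : ℝ, 1 ≤ x → x ≤ 2 ^ j → mom ω x ≤ (D' + 2 * D) * tl ω (1 - 1 / x) := by
    induction j with
    | zero =>
      intro x hx hxj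
      refine (hsmall x ⟨hx, by linarith [pow_zero (2 : ℝ)]⟩).trans ?_
      nlinarith [htl hx]
    | succ j ih =>
      intro x hx hxj
      rcases le_total x (2 * a) with hxa | hxa
      · refine (hsmall x ⟨hx, hxa⟩).trans ?_
        nlinarith [htl hx]
      · rw [pow_succ] at hxj
        have hstep := hdouble (D' + 2 * D) (x / 2) (by positivity) (by linarith)
          (ih _ (by linarith) (by linarith))
        rw [mul_div_cancel₀ _ two_ne_zero] at hstep
        refine hstep.trans ?_
        nlinarith [htl hx]
  refine ⟨D' + 2 * D, by positivity, fun x hx => ?_⟩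
  obtain ⟨j, hj⟩ := pow_unbounded_of_one_lt x one_lt_two
  exact hdyadic j x hx hj.le

theorem exists_mom_le_mom_two_mul_of_dhat (hω : IsRadialWeight ω) (hD : Dhat ω) :
    ∃ A : ℝ, 0 < A ∧ ∀ x : ℝ, 1 ≤ x → mom ω x ≤ A * mom ω (2 * x) := by
  obtain ⟨A, hA, hmom⟩ := hω.exists_mom_le_of_dhat hD
  obtain ⟨D, hD1, hD⟩ := hω.exists_tl_le_of_dhat hD (K := 4) (by norm_num)
  refine ⟨A * (D * 2), by positivity, fun x hx => ?_⟩
  have hx0 : 0 < x := by linarith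
  have hdouble := hD (1 / x) ⟨by positivity, (div_le_one hx0).2 hx⟩
  rw [show 1 / x / 4 = 1 / (2 * (2 * x)) by field_simp; norm_num] at hdouble
  calc mom ω x ≤ A * tl ω (1 - 1 / x) := hmom x hx
    _ ≤ A * (D * (2 * mom ω (2 * x))) := by
      gcongr
      exact hdouble.trans (by gcongr; exact hω.tl_le_two_mul_mom (by linarith))
    _ = A * (D * 2) * mom ω (2 * x) := by ring

end IsRadialWeight

/-! ### Absolutely convergent power series on the unit circle -/

section PowerSeries

variable {c : ℕ → ℂ}

theorem norm_mul_pow_le (c : ℕ → ℂ) {w : ℂ} (hw : ‖w‖ ≤ 1) (n : ℕ) : ‖c n * w ^ n‖ ≤ ‖c n‖ := by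
  rw [norm_mul, norm_pow]
  exact mul_le_of_le_one_right (norm_nonneg _) (pow_le_one₀ (norm_nonneg _) hw)

theorem summable_norm_mul_pow (hc : Summable fun n => ‖c n‖) {w : ℂ} (hw : ‖w‖ ≤ 1) :
    Summable fun n => ‖c n * w ^ n‖ :=
  hc.of_nonneg_of_le (fun _ => norm_nonneg _) (norm_mul_pow_le c hw)

theorem norm_tsum_mul_pow_le (hc : Summable fun n => ‖c n‖) {w : ℂ} (hw : ‖w‖ ≤ 1) :
    ‖∑' n, c n * w ^ n‖ ≤ ∑' n, ‖c n‖ :=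
  (norm_tsum_le_tsum_norm (summable_norm_mul_pow hc hw)).trans
    ((summable_norm_mul_pow hc hw).tsum_le_tsum (norm_mul_pow_le c hw) hc)

theorem continuousOn_tsum_mul_pow (hc : Summable fun n => ‖c n‖) :
    ContinuousOn (fun w : ℂ => ∑' n, c n * w ^ n) (Metric.closedBall 0 1) :=
  continuousOn_tsum (fun _ => by fun_prop) hc fun n _ hw =>
    norm_mul_pow_le c (mem_closedBall_zero_iff.1 hw) n

theorem hasSum_integral_mul_tsum_mul_pow {α : Type*} [MeasurableSpace α] {μ : Measure α}
    {φ κ : α → ℂ} (hφ : Integrable φ μ) (hκ : AEStronglyMeasurable κ μ)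
    (hκ1 : ∀ᵐ x ∂μ, ‖κ x‖ ≤ 1) (hc : Summable fun n => ‖c n‖) :
    HasSum (fun n => c n * ∫ x, φ x * κ x ^ n ∂μ) (∫ x, φ x * ∑' n, c n * κ x ^ n ∂μ) := by
  have hpow (n : ℕ) : ∀ᵐ x ∂μ, ‖κ x ^ n‖ ≤ 1 := by
    filter_upwards [hκ1] with x hx
    rw [norm_pow]
    exact pow_le_one₀ (norm_nonneg _) hx
  have hint (n : ℕ) : Integrable (fun x => φ x * κ x ^ n) μ := hφ.mul_bdd (hκ.pow n) (hpow n)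
  have hbound (n : ℕ) :
      ∫ x, ‖c n * (φ x * κ x ^ n)‖ ∂μ ≤ ‖c n‖ * ∫ x, ‖φ x‖ ∂μ := by
    simp only [norm_mul (c n), integral_const_mul]
    refine mul_le_mul_of_nonneg_left (integral_mono_ae (hint n).norm hφ.norm ?_) (norm_nonneg _)
    filter_upwards [hpow n] with x hx
    rw [norm_mul]
    exact mul_le_of_le_one_right (norm_nonneg _) hx
  have hsum := hasSum_integral_of_summable_integral_norm (F := fun n x => c n * (φ x * κ x ^ n))
    (fun n => (hint n).const_mul _) ((hc.mul_right _).of_nonneg_of_le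
      (fun _ => integral_nonneg fun _ => norm_nonneg _) hbound)
  simpa only [integral_const_mul, ← tsum_mul_left, mul_left_comm] using hsum

theorem integral_exp_pow_mul_exp_neg_pow (m n : ℕ) :
    ∫ θ in (-Real.pi)..Real.pi, cexp (-(θ * I)) ^ m * cexp (θ * I) ^ n =
      if m = n then 2 * (Real.pi : ℂ) else 0 := by
  have hexp (θ : ℝ) :
      cexp (-(θ * I)) ^ m * cexp (θ * I) ^ n = cexp (((n : ℂ) - m) * I * θ) := by
    rw [← Complex.exp_nat_mul, ← Complex.exp_nat_mul, ← Complex.exp_add]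
    congr 1; ring
  simp only [hexp]
  split_ifs with h
  · simp only [h, sub_self, zero_mul, Complex.exp_zero, intervalIntegral.integral_const,
      sub_neg_eq_add, real_smul, mul_one]
    push_cast; ring
  · have hne : ((n : ℂ) - m) * I ≠ 0 :=
      mul_ne_zero (sub_ne_zero.2 (by exact_mod_cast Ne.symm h)) I_ne_zero
    have hperiod : cexp (((n : ℂ) - m) * I * (Real.pi : ℝ)) =
        cexp (((n : ℂ) - m) * I * ((-Real.pi : ℝ))) := by
      rw [Complex.exp_eq_exp_iff_exists_int]
      exact ⟨(n : ℤ) - m, by push_cast; ring⟩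
    rw [integral_exp_mul_complex hne, hperiod, sub_self, zero_div]

theorem continuous_tsum_mul_exp_pow (hc : Summable fun n => ‖c n‖) :
    Continuous fun θ : ℝ => ∑' n, c n * cexp (θ * I) ^ n :=
  (continuousOn_tsum_mul_pow hc).comp_continuous (by fun_prop) fun θ => by
    rw [mem_closedBall_zero_iff, Complex.norm_exp_ofReal_mul_I]

theorem hasSum_integral_mul_tsum_mul_exp_pow (hc : Summable fun n => ‖c n‖) {φ : ℝ → ℂ}
    (hφ : Continuous φ) :
    HasSum (fun n => c n * ∫ θ in (-Real.pi)..Real.pi, φ θ * cexp (θ * I) ^ n)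
      (∫ θ in (-Real.pi)..Real.pi, φ θ * ∑' n, c n * cexp (θ * I) ^ n) := by
  simp only [intervalIntegral.integral_of_le (neg_le_self Real.pi_pos.le)]
  exact hasSum_integral_mul_tsum_mul_pow (hφ.intervalIntegrable _ _).1
    (by fun_prop : Continuous fun θ : ℝ => cexp (θ * I)).aestronglyMeasurable
    (Filter.Eventually.of_forall fun θ => (Complex.norm_exp_ofReal_mul_I θ).le) hc

theorem integral_exp_neg_pow_mul_tsum (hc : Summable fun n => ‖c n‖) (m : ℕ) :
    ∫ θ in (-Real.pi)..Real.pi, cexp (-(θ * I)) ^ m * ∑' n, c n * cexp (θ * I) ^ n =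
      c m * (2 * Real.pi) := by
  refine (hasSum_integral_mul_tsum_mul_exp_pow hc (by fun_prop)).unique ?_
  simp only [integral_exp_pow_mul_exp_neg_pow, mul_ite, mul_zero]
  convert hasSum_ite_eq m (c m * (2 * (Real.pi : ℂ))) using 2 with n
  rcases eq_or_ne m n with rfl | h
  · simp only [if_true]
  · simp only [h, h.symm, if_false]

theorem integral_norm_tsum_mul_exp_pow_sq (hc : Summable fun n => ‖c n‖) :
    ∫ θ in (-Real.pi)..Real.pi, ‖∑' n, c n * cexp (θ * I) ^ n‖ ^ 2 =
      2 * Real.pi * ∑' n, ‖c n‖ ^ 2 := by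
  set g : ℝ → ℂ := fun θ => ∑' n, c n * cexp (θ * I) ^ n with hg
  have hgcont : Continuous g := continuous_tsum_mul_exp_pow hc
  have hcoeff (n : ℕ) : ∫ θ in (-Real.pi)..Real.pi, starRingEnd ℂ (g θ) * cexp (θ * I) ^ n =
      starRingEnd ℂ (c n) * (2 * Real.pi) := by
    have h := congrArg (starRingEnd ℂ) (integral_exp_neg_pow_mul_tsum hc n)
    rw [intervalIntegral.integral_of_le (neg_le_self Real.pi_pos.le), ← integral_conj] at h
    simp only [map_mul, map_pow, ← Complex.exp_conj, map_neg, conj_ofReal, conj_I, map_ofNat,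
      mul_neg, neg_neg] at h
    rw [← h, intervalIntegral.integral_of_le (neg_le_self Real.pi_pos.le)]
    simp only [hg, mul_comm]
  have hsum := hasSum_integral_mul_tsum_mul_exp_pow hc (φ := fun θ => starRingEnd ℂ (g θ))
    (by fun_prop)
  have hterm (n : ℕ) : c n * (starRingEnd ℂ (c n) * (2 * Real.pi)) =
      ((2 * Real.pi * ‖c n‖ ^ 2 : ℝ) : ℂ) := by
    rw [← mul_assoc, Complex.mul_conj, Complex.normSq_eq_norm_sq]
    push_cast; ring
  have hsq (θ : ℝ) : starRingEnd ℂ (g θ) * ∑' n, c n * cexp (θ * I) ^ n =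
      ((‖g θ‖ ^ 2 : ℝ) : ℂ) := by
    rw [mul_comm, Complex.mul_conj, Complex.normSq_eq_norm_sq]
  simp only [hcoeff, hterm, hsq, intervalIntegral.integral_ofReal] at hsum
  rw [← (Complex.hasSum_ofReal.1 hsum).tsum_eq, tsum_mul_left]

theorem integral_norm_tsum_mul_tsum_le {a b : ℕ → ℂ} (ha : Summable fun n => ‖a n‖)
    (hb : Summable fun n => ‖b n‖) {H : ℝ} (hH : 0 < H) :
    ∫ θ in (-Real.pi)..Real.pi,
        ‖(∑' n, a n * cexp (θ * I) ^ n) * ∑' n, b n * cexp (θ * I) ^ n‖ ≤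
      Real.pi * (H⁻¹ * ∑' n, ‖a n‖ ^ 2 + H * ∑' n, ‖b n‖ ^ 2) := by
  have hu := continuous_tsum_mul_exp_pow ha
  have hv := continuous_tsum_mul_exp_pow hb
  have hamgm (x y : ℝ) : x * y ≤ 2⁻¹ * H⁻¹ * x ^ 2 + 2⁻¹ * H * y ^ 2 := by
    have hsq : 0 ≤ 2⁻¹ * H⁻¹ * (x - H * y) ^ 2 := by positivity
    have hexpand : 2⁻¹ * H⁻¹ * (x - H * y) ^ 2 =
        2⁻¹ * H⁻¹ * x ^ 2 + 2⁻¹ * H * y ^ 2 - x * y := by field_simp; ring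
    linarith
  calc _ ≤ ∫ θ in (-Real.pi)..Real.pi, (2⁻¹ * H⁻¹ * ‖∑' n, a n * cexp (θ * I) ^ n‖ ^ 2 +
          2⁻¹ * H * ‖∑' n, b n * cexp (θ * I) ^ n‖ ^ 2) := by
        refine intervalIntegral.integral_mono_on (neg_le_self Real.pi_pos.le)
          (hu.mul hv).norm.continuousOn.intervalIntegrable
          (by fun_prop : Continuous _).continuousOn.intervalIntegrable fun θ _ => ?_
        rw [norm_mul]
        exact hamgm _ _
    _ = 2⁻¹ * H⁻¹ * (2 * Real.pi * ∑' n, ‖a n‖ ^ 2) +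
          2⁻¹ * H * (2 * Real.pi * ∑' n, ‖b n‖ ^ 2) := by
        rw [intervalIntegral.integral_add
          (by fun_prop : Continuous _).continuousOn.intervalIntegrable
          (by fun_prop : Continuous _).continuousOn.intervalIntegrable,
          intervalIntegral.integral_const_mul, intervalIntegral.integral_const_mul,
          integral_norm_tsum_mul_exp_pow_sq ha, integral_norm_tsum_mul_exp_pow_sq hb]
    _ = Real.pi * (H⁻¹ * ∑' n, ‖a n‖ ^ 2 + H * ∑' n, ‖b n‖ ^ 2) := by ring

end PowerSeries

/-! ### The Bergman kernel and its derivative -/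

/-- The `n`-th Taylor coefficient `1 / (2 ω_{2n+1})` of the Bergman kernel of `ω`, as a function of
`conj z * ζ`. -/
def bergmanCoeff (ω : ℝ → ℝ) (n : ℕ) : ℝ := 1 / (2 * mom ω (2 * n + 1))

/-- The derivative of `w ↦ ∑ n, bergmanCoeff ω n * w ^ n`; it represents the derivative of the
Bergman projection. -/
def bergmanKerDeriv (ω : ℝ → ℝ) (w : ℂ) : ℂ :=
  ∑' n : ℕ, (((n + 1) * bergmanCoeff ω (n + 1) : ℝ) : ℂ) * w ^ n

/-- The `n`-th Taylor coefficient of `(1 - w) * bergmanKerDeriv ω w`. -/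
def bergmanDiff (ω : ℝ → ℝ) (n : ℕ) : ℝ :=
  (n + 1) * bergmanCoeff ω (n + 1) - n * bergmanCoeff ω n

theorem mem_unitDisc {z : ℂ} : z ∈ unitDisc ↔ ‖z‖ < 1 := mem_ball_zero_iff

theorem bKer_eq_tsum (ω : ℝ → ℝ) (z ζ : ℂ) :
    bKer ω z ζ = ∑' n : ℕ, (bergmanCoeff ω n : ℂ) * (starRingEnd ℂ z * ζ) ^ n := by
  refine tsum_congr fun n => ?_
  rw [bergmanCoeff, ofReal_div, ofReal_one, one_div, div_eq_inv_mul]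

theorem norm_ofReal_mul_pow {x : ℝ} (hx : 0 ≤ x) (w : ℂ) (n : ℕ) :
    ‖(x : ℂ) * w ^ n‖ = x * ‖w‖ ^ n := by
  rw [norm_mul, norm_pow, Complex.norm_of_nonneg hx]

theorem succ_mul_pow_mul_one_sub_le_one (n : ℕ) {s : ℝ} (hs0 : 0 ≤ s) (hs1 : s ≤ 1) :
    (n + 1) * (s ^ n * (1 - s)) ≤ 1 := by
  have hsum : ((n : ℝ) + 1) * s ^ n ≤ ∑ i ∈ Finset.range (n + 1), s ^ i := by
    have h := Finset.card_nsmul_le_sum (Finset.range (n + 1)) (fun i => s ^ i) (s ^ n) fun i hi =>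
      pow_le_pow_of_le_one hs0 hs1 (Nat.lt_succ_iff.1 (Finset.mem_range.1 hi))
    simpa only [Finset.card_range, nsmul_eq_mul, Nat.cast_add, Nat.cast_one] using h
  calc (n + 1) * (s ^ n * (1 - s)) = (n + 1) * s ^ n * (1 - s) := by ring
    _ ≤ (∑ i ∈ Finset.range (n + 1), s ^ i) * (1 - s) :=
      mul_le_mul_of_nonneg_right hsum (sub_nonneg.2 hs1)
    _ = 1 - s ^ (n + 1) := geom_sum_mul_neg s (n + 1)
    _ ≤ 1 := sub_le_self _ (by positivity)

namespace IsRadialWeight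

variable {ω : ℝ → ℝ}

theorem bergmanCoeff_pos (hω : IsRadialWeight ω) (n : ℕ) : 0 < bergmanCoeff ω n := by
  have := hω.mom_pos (x := 2 * n + 1) (by positivity)
  unfold bergmanCoeff
  positivity

theorem bergmanCoeff_le (hω : IsRadialWeight ω) (n : ℕ) {t : ℝ} (ht : t ∈ Ioo (0 : ℝ) 1) :
    bergmanCoeff ω n ≤ 1 / (2 * (t ^ (2 * n + 1) * tl ω t)) := by
  have hmom := hω.rpow_mul_tl_le_mom (x := 2 * n + 1) (by positivity) (Ioo_subset_Icc_self ht)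
  have htl := hω.tl_pos (Ioo_subset_Ico_self ht)
  have hpow : t ^ (2 * (n : ℝ) + 1) = t ^ (2 * n + 1) := by
    rw [← Real.rpow_natCast]; push_cast; rfl
  rw [hpow] at hmom
  have := pow_pos ht.1 (2 * n + 1)
  unfold bergmanCoeff
  gcongr

theorem summable_succ_mul_bergmanCoeff_succ (hω : IsRadialWeight ω) {r : ℝ}
    (hr : r ∈ Ico (0 : ℝ) 1) :
    Summable fun n : ℕ => (n + 1) * bergmanCoeff ω (n + 1) * r ^ n := by
  obtain ⟨hr0, hr1⟩ := hr
  obtain ⟨t, ht, hrt⟩ : ∃ t ∈ Ioo (0 : ℝ) 1, r < t ^ 2 :=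
    ⟨(1 + r) / 2, ⟨by positivity, by linarith⟩, by nlinarith [sq_pos_of_pos (sub_pos.2 hr1)]⟩
  have htl := hω.tl_pos (Ioo_subset_Ico_self ht)
  have ht0 := ht.1
  have hq0 : 0 ≤ r / t ^ 2 := by positivity
  have hq1 : r / t ^ 2 < 1 := (div_lt_one (by positivity)).2 hrt
  have hgeom : Summable fun n : ℕ => ((n : ℝ) + 1) * (r / t ^ 2) ^ n := by
    have h := (summable_pow_mul_geometric_of_norm_lt_one 1
      (by rwa [Real.norm_of_nonneg hq0])).add (summable_geometric_of_lt_one hq0 hq1)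
    simpa only [pow_one, add_mul, one_mul] using h
  refine (hgeom.mul_left (1 / (2 * (t ^ 3 * tl ω t)))).of_nonneg_of_le (fun n => ?_) fun n => ?_
  · have := hω.bergmanCoeff_pos (n + 1)
    positivity
  · calc (n + 1) * bergmanCoeff ω (n + 1) * r ^ n
        ≤ (n + 1) * (1 / (2 * (t ^ (2 * (n + 1) + 1) * tl ω t))) * r ^ n := by
          gcongr; exact hω.bergmanCoeff_le (n + 1) ht
      _ = 1 / (2 * (t ^ 3 * tl ω t)) * ((n + 1) * (r / t ^ 2) ^ n) := by
          rw [div_pow, ← pow_mul, show 2 * (n + 1) + 1 = 2 * n + 3 by ring, pow_add]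
          field_simp

theorem summable_mul_bergmanCoeff (hω : IsRadialWeight ω) {r : ℝ} (hr : r ∈ Ico (0 : ℝ) 1) :
    Summable fun n : ℕ => n * bergmanCoeff ω n * r ^ n := by
  rw [← summable_nat_add_iff 1]
  refine ((hω.summable_succ_mul_bergmanCoeff_succ hr).mul_left r).congr fun n => ?_
  push_cast; ring

theorem summable_bergmanCoeff (hω : IsRadialWeight ω) {r : ℝ} (hr : r ∈ Ico (0 : ℝ) 1) :
    Summable fun n : ℕ => bergmanCoeff ω n * r ^ n := by
  have hr0 := hr.1
  rw [← summable_nat_add_iff 1]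
  refine ((summable_nat_add_iff 1).2 (hω.summable_mul_bergmanCoeff hr)).of_nonneg_of_le
    (fun n => ?_) fun n => ?_
  all_goals have := hω.bergmanCoeff_pos (n + 1)
  · positivity
  · refine mul_le_mul_of_nonneg_right (le_mul_of_one_le_left this.le ?_) (by positivity)
    exact_mod_cast Nat.le_add_left 1 n

theorem summable_norm_bergmanCoeff (hω : IsRadialWeight ω) {w : ℂ} (hw : ‖w‖ < 1) :
    Summable fun n : ℕ => ‖(bergmanCoeff ω n : ℂ) * w ^ n‖ := by
  simpa only [norm_ofReal_mul_pow (hω.bergmanCoeff_pos _).le] using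
    hω.summable_bergmanCoeff ⟨norm_nonneg w, hw⟩

theorem summable_norm_mul_bergmanCoeff (hω : IsRadialWeight ω) {w : ℂ} (hw : ‖w‖ < 1) :
    Summable fun n : ℕ => ‖((n * bergmanCoeff ω n : ℝ) : ℂ) * w ^ n‖ := by
  simpa only [norm_ofReal_mul_pow (mul_nonneg (Nat.cast_nonneg _) (hω.bergmanCoeff_pos _).le)] using
    hω.summable_mul_bergmanCoeff ⟨norm_nonneg w, hw⟩

theorem summable_norm_bergmanKerDeriv (hω : IsRadialWeight ω) {w : ℂ} (hw : ‖w‖ < 1) :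
    Summable fun n : ℕ => ‖(((n + 1) * bergmanCoeff ω (n + 1) : ℝ) : ℂ) * w ^ n‖ := by
  have hnonneg (n : ℕ) : 0 ≤ ((n : ℝ) + 1) * bergmanCoeff ω (n + 1) :=
    mul_nonneg (by positivity) (hω.bergmanCoeff_pos _).le
  simpa only [norm_ofReal_mul_pow (hnonneg _)] using
    hω.summable_succ_mul_bergmanCoeff_succ ⟨norm_nonneg w, hw⟩

theorem one_sub_mul_bergmanKerDeriv (hω : IsRadialWeight ω) {w : ℂ} (hw : ‖w‖ < 1) :
    (1 - w) * bergmanKerDeriv ω w = ∑' n : ℕ, (bergmanDiff ω n : ℂ) * w ^ n := by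
  have hsum := (hω.summable_norm_bergmanKerDeriv hw).of_norm
  have hsum' := (hω.summable_norm_mul_bergmanCoeff hw).of_norm
  have hshift : w * bergmanKerDeriv ω w =
      ∑' n : ℕ, ((n * bergmanCoeff ω n : ℝ) : ℂ) * w ^ n := by
    rw [hsum'.tsum_eq_zero_add, bergmanKerDeriv, ← tsum_mul_left]
    simp only [Nat.cast_zero, zero_mul, ofReal_zero, zero_add]
    refine tsum_congr fun n => ?_
    push_cast; ring
  rw [sub_mul, one_mul, hshift, bergmanKerDeriv, ← hsum.tsum_sub hsum']
  refine tsum_congr fun n => ?_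
  rw [← sub_mul, ← ofReal_sub, bergmanDiff]

theorem succ_mul_mom_sub_mom_le (hω : IsRadialWeight ω) (n : ℕ) :
    (n + 1) * (mom ω (2 * n + 1) - mom ω (2 * (n + 1 : ℕ) + 1)) ≤ 2 * mom ω (n + 1) := by
  have hpow (k : ℕ) : Continuous fun s : ℝ => s ^ (k : ℝ) :=
    Real.continuous_rpow_const (Nat.cast_nonneg k)
  have hint {k : ℕ} := hω.intervalIntegrable_mul (hpow k) (a := 0) (b := 1) (by norm_num)
    (by norm_num)
  have hmono := hω.integral_mul_mono (a := 0) (b := 1)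
    (φ := fun s => (n + 1) * (s ^ ((2 * n + 1 : ℕ) : ℝ) - s ^ ((2 * (n + 1) + 1 : ℕ) : ℝ)))
    (ψ := fun s => 2 * s ^ ((n + 1 : ℕ) : ℝ))
    (continuous_const.mul ((hpow _).sub (hpow _))) (continuous_const.mul (hpow _))
    le_rfl zero_le_one le_rfl fun s hs => ?_
  · simp only [mul_assoc, sub_mul, intervalIntegral.integral_const_mul] at hmono
    rw [intervalIntegral.integral_sub hint hint] at hmono
    simpa only [mom, Nat.cast_add, Nat.cast_mul, Nat.cast_one, Nat.cast_ofNat] using hmono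
  · simp only [Real.rpow_natCast]
    have hbase := succ_mul_pow_mul_one_sub_le_one n hs.1.le hs.2.le
    calc ((n : ℝ) + 1) * (s ^ (2 * n + 1) - s ^ (2 * (n + 1) + 1))
        = (n + 1) * (s ^ n * (1 - s)) * ((1 + s) * s ^ (n + 1)) := by ring
      _ ≤ 1 * (2 * s ^ (n + 1)) := by
          have hs0 := hs.1
          gcongr
          linarith [hs.2]
      _ = 2 * s ^ (n + 1) := one_mul _

theorem exists_abs_bergmanDiff_le_of_dhat (hω : IsRadialWeight ω) (hD : Dhat ω) :
    ∃ A : ℝ, 0 < A ∧ ∀ n : ℕ, |bergmanDiff ω n| ≤ A * bergmanCoeff ω (n + 1) := by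
  obtain ⟨A, hA, hdouble⟩ := hω.exists_mom_le_mom_two_mul_of_dhat hD
  refine ⟨1 + 2 * A, by positivity, fun n => ?_⟩
  have hpos := hω.mom_pos (x := 2 * n + 1) (by positivity)
  have hpos' := hω.mom_pos (x := 2 * (n + 1 : ℕ) + 1) (by positivity)
  have hcoeff := hω.bergmanCoeff_pos (n + 1)
  have hanti : mom ω (2 * (n + 1 : ℕ) + 1) ≤ mom ω (2 * n + 1) :=
    hω.mom_le_mom (by positivity) (by push_cast; linarith)
  have hupper : (n + 1) * (mom ω (2 * n + 1) - mom ω (2 * (n + 1 : ℕ) + 1)) ≤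
      2 * A * mom ω (2 * n + 1) :=
    calc _ ≤ 2 * mom ω (n + 1) := hω.succ_mul_mom_sub_mom_le n
      _ ≤ 2 * (A * mom ω (2 * (n + 1))) := by
        gcongr; exact hdouble _ (le_add_of_nonneg_left n.cast_nonneg)
      _ ≤ 2 * (A * mom ω (2 * n + 1)) := by
        gcongr; exact hω.mom_le_mom (by positivity) (by linarith)
      _ = 2 * A * mom ω (2 * n + 1) := by ring
  have hdiff : bergmanDiff ω n = (1 + n * ((mom ω (2 * n + 1) - mom ω (2 * (n + 1 : ℕ) + 1)) /
      mom ω (2 * n + 1))) * bergmanCoeff ω (n + 1) := by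
    unfold bergmanDiff bergmanCoeff
    generalize mom ω (2 * n + 1) = m at hpos ⊢
    generalize mom ω (2 * (n + 1 : ℕ) + 1) = m' at hpos' ⊢
    field_simp; ring
  have hratio : n * ((mom ω (2 * n + 1) - mom ω (2 * (n + 1 : ℕ) + 1)) / mom ω (2 * n + 1)) ≤
      2 * A := by
    rw [← mul_div_assoc, div_le_iff₀ hpos]
    linarith
  have := sub_nonneg.2 hanti
  rw [hdiff, abs_of_nonneg (by positivity)]
  gcongr

theorem exists_bergmanCoeff_sq_mul_pow_le_of_dhat (hω : IsRadialWeight ω) (hD : Dhat ω) :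
    ∃ M : ℝ, 0 < M ∧ ∀ (n : ℕ), ∀ ρ ∈ Ico (0 : ℝ) 1,
      bergmanCoeff ω (n + 1) ^ 2 * ρ ^ n ≤ M / tl ω ρ ^ 2 := by
  obtain ⟨D, hD1, hD⟩ := hω.exists_tl_le_of_dhat hD (K := 4) (by norm_num)
  refine ⟨2 * D ^ 2, by positivity, fun n ρ ⟨hρ0, hρ1⟩ => ?_⟩
  obtain ⟨t, htdef⟩ : ∃ t, t = 1 - (1 - ρ) / 4 := ⟨_, rfl⟩
  have ht34 : 3 / 4 ≤ t := by linarith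
  have ht : t ∈ Ioo (0 : ℝ) 1 := ⟨by linarith, by linarith⟩
  have htl := hω.tl_pos (Ioo_subset_Ico_self ht)
  have htlρ := hω.tl_pos ⟨hρ0, hρ1⟩
  have hcoeff := hω.bergmanCoeff_pos (n + 1)
  have htail : tl ω ρ ≤ D * tl ω t := by
    have := hD (1 - ρ) ⟨by linarith, by linarith⟩
    rwa [sub_sub_cancel, ← htdef] at this
  have hbernoulli : ρ ≤ t ^ 4 := by
    have h := one_add_mul_le_pow (a := -((1 - ρ) / 4)) (by linarith) 4
    rw [← sub_eq_add_neg 1 ((1 - ρ) / 4), ← htdef] at h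
    refine le_trans (le_of_eq ?_) h
    push_cast; ring
  have hsix : 1 / 6 ≤ t ^ 6 := le_trans (by norm_num) (pow_le_pow_left₀ (by norm_num) ht34 6)
  calc bergmanCoeff ω (n + 1) ^ 2 * ρ ^ n
      ≤ (1 / (2 * (t ^ (2 * (n + 1) + 1) * tl ω t))) ^ 2 * (t ^ 4) ^ n := by
        gcongr; exact hω.bergmanCoeff_le (n + 1) ht
    _ = 1 / (4 * t ^ 6 * tl ω t ^ 2) := by
        rw [div_pow, one_pow, mul_pow, mul_pow, ← pow_mul, ← pow_mul,
          show (2 * (n + 1) + 1) * 2 = 4 * n + 6 by ring, pow_add]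
        field_simp; norm_num
    _ ≤ 1 / (4 * (1 / 6) * tl ω t ^ 2) := by gcongr
    _ = 3 / 2 / tl ω t ^ 2 := by field_simp; norm_num
    _ ≤ 2 / tl ω t ^ 2 := by gcongr; norm_num
    _ = 2 * D ^ 2 / (D * tl ω t) ^ 2 := by field_simp
    _ ≤ 2 * D ^ 2 / tl ω ρ ^ 2 := by gcongr

theorem bergmanKerDeriv_eq_mul (hω : IsRadialWeight ω) {q e : ℂ} (hq : ‖q * e‖ < 1) :
    bergmanKerDeriv ω (q * e) =
      (∑' n : ℕ, q ^ n * e ^ n) * ∑' n : ℕ, (bergmanDiff ω n : ℂ) * q ^ n * e ^ n := by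
  have hne : 1 - q * e ≠ 0 := fun h => by
    rw [← sub_eq_zero.1 h, norm_one] at hq
    exact lt_irrefl 1 hq
  simp only [mul_assoc, ← mul_pow]
  rw [tsum_geometric_of_norm_lt_one hq, ← hω.one_sub_mul_bergmanKerDeriv hq,
    inv_mul_cancel_left₀ hne]

theorem exists_tsum_bergmanDiff_sq_le_of_dhat (hω : IsRadialWeight ω) (hD : Dhat ω) :
    ∃ M : ℝ, 0 < M ∧ ∀ q : ℂ, ‖q‖ < 1 → (Summable fun n => ‖(bergmanDiff ω n : ℂ) * q ^ n‖) ∧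
      ∑' n, ‖(bergmanDiff ω n : ℂ) * q ^ n‖ ^ 2 ≤ M / (tl ω ‖q‖ ^ 2 * (1 - ‖q‖)) := by
  obtain ⟨A, hA, hdiff⟩ := hω.exists_abs_bergmanDiff_le_of_dhat hD
  obtain ⟨M, hM, hsq⟩ := hω.exists_bergmanCoeff_sq_mul_pow_le_of_dhat hD
  refine ⟨A ^ 2 * M, by positivity, fun q hq => ⟨?_, ?_⟩⟩
  · refine ((hω.summable_norm_bergmanKerDeriv hq).of_norm.sub
      (hω.summable_norm_mul_bergmanCoeff hq).of_norm).norm.congr fun n => ?_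
    rw [← sub_mul, ← ofReal_sub, bergmanDiff]
  · have hle (n : ℕ) : ‖(bergmanDiff ω n : ℂ) * q ^ n‖ ^ 2 ≤
        A ^ 2 * (M / tl ω ‖q‖ ^ 2) * ‖q‖ ^ n := by
      have := hω.bergmanCoeff_pos (n + 1)
      rw [norm_mul, norm_pow, Complex.norm_real, Real.norm_eq_abs]
      calc (|bergmanDiff ω n| * ‖q‖ ^ n) ^ 2
          ≤ (A * bergmanCoeff ω (n + 1) * ‖q‖ ^ n) ^ 2 := by gcongr; exact hdiff n
        _ = A ^ 2 * (bergmanCoeff ω (n + 1) ^ 2 * ‖q‖ ^ n) * ‖q‖ ^ n := by ring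
        _ ≤ A ^ 2 * (M / tl ω ‖q‖ ^ 2) * ‖q‖ ^ n := by
          gcongr; exact hsq n ‖q‖ ⟨norm_nonneg q, hq⟩
    have hgeom := (hasSum_geometric_of_lt_one (norm_nonneg q) hq).mul_left
      (A ^ 2 * (M / tl ω ‖q‖ ^ 2))
    have hsum := hgeom.summable.of_nonneg_of_le (fun n => by positivity) hle
    refine (hsum.tsum_le_tsum hle hgeom.summable).trans_eq (hgeom.tsum_eq.trans ?_)
    have := sub_pos.2 hq
    have := hω.tl_pos ⟨norm_nonneg q, hq⟩
    field_simp

theorem exists_integral_norm_bergmanKerDeriv_le_of_dhat (hω : IsRadialWeight ω) (hD : Dhat ω) :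
    ∃ B : ℝ, 0 < B ∧ ∀ q : ℂ, ‖q‖ < 1 →
      ∫ θ in (-Real.pi)..Real.pi, ‖bergmanKerDeriv ω (q * cexp (θ * I))‖ ≤
        B / ((1 - ‖q‖) * tl ω ‖q‖) := by
  obtain ⟨M, hM, hdiff⟩ := hω.exists_tsum_bergmanDiff_sq_le_of_dhat hD
  refine ⟨Real.pi * (1 + M), by positivity, fun q hq => ?_⟩
  obtain ⟨hsum, hsq⟩ := hdiff q hq
  have hgap : 0 < 1 - ‖q‖ := sub_pos.2 hq
  have htl := hω.tl_pos ⟨norm_nonneg q, hq⟩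
  have hgeom : Summable fun n => ‖q ^ n‖ := by
    simpa only [norm_pow] using summable_geometric_of_lt_one (norm_nonneg q) hq
  have hgeomsq : ∑' n, ‖q ^ n‖ ^ 2 ≤ 1 / (1 - ‖q‖) := by
    simp only [norm_pow, ← pow_mul, mul_comm _ 2]
    simp only [pow_mul]
    rw [tsum_geometric_of_lt_one (by positivity) (by nlinarith [norm_nonneg q]), ← one_div]
    exact one_div_le_one_div_of_le hgap (by nlinarith [norm_nonneg q])
  have hnorm (θ : ℝ) : ‖q * cexp (θ * I)‖ < 1 := by
    rwa [norm_mul, Complex.norm_exp_ofReal_mul_I, mul_one]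
  simp only [fun θ : ℝ => hω.bergmanKerDeriv_eq_mul (hnorm θ)]
  calc _ ≤ Real.pi * ((tl ω ‖q‖)⁻¹ * ∑' n, ‖q ^ n‖ ^ 2 +
        tl ω ‖q‖ * ∑' n, ‖(bergmanDiff ω n : ℂ) * q ^ n‖ ^ 2) :=
      integral_norm_tsum_mul_tsum_le hgeom hsum htl
    _ ≤ Real.pi * ((tl ω ‖q‖)⁻¹ * (1 / (1 - ‖q‖)) +
        tl ω ‖q‖ * (M / (tl ω ‖q‖ ^ 2 * (1 - ‖q‖)))) := by
      have := Real.pi_pos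
      gcongr
    _ = Real.pi * (1 + M) / ((1 - ‖q‖) * tl ω ‖q‖) := by field_simp

end IsRadialWeight

/-! ### Polar coordinates on the unit disc -/

theorem measurableSet_unitDisc : MeasurableSet unitDisc := measurableSet_ball

theorem zero_mem_unitDisc : (0 : ℂ) ∈ unitDisc := Metric.mem_ball_self one_pos

theorem norm_ofReal_mul_exp_mul_I {s : ℝ} (hs : 0 ≤ s) (θ : ℝ) : ‖(s : ℂ) * cexp (θ * I)‖ = s := by
  rw [norm_mul, norm_exp_ofReal_mul_I, Complex.norm_of_nonneg hs, mul_one]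

theorem polarCoord_symm_eq_mul_exp (p : ℝ × ℝ) :
    Complex.polarCoord.symm p = p.1 * cexp (p.2 * I) := by
  rw [Complex.polarCoord_symm_apply, Complex.exp_mul_I, ofReal_cos, ofReal_sin]

theorem measurable_polarCoord_symm : Measurable Complex.polarCoord.symm := by
  simp only [funext polarCoord_symm_eq_mul_exp]
  fun_prop

theorem preimage_unitDisc_inter_polarCoord_target :
    Complex.polarCoord.symm ⁻¹' unitDisc ∩ polarCoord.target =
      Ioo 0 1 ×ˢ Ioo (-Real.pi) Real.pi := by
  ext ⟨s, θ⟩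
  simp only [polarCoord_target, mem_inter_iff, mem_preimage, polarCoord_symm_eq_mul_exp,
    mem_unitDisc, mem_prod, mem_Ioi, mem_Ioo]
  refine ⟨fun ⟨h1, h0, hθ⟩ => ⟨⟨h0, ?_⟩, hθ⟩, fun ⟨⟨h0, h1⟩, hθ⟩ => ⟨?_, h0, hθ⟩⟩ <;>
    simpa only [norm_ofReal_mul_exp_mul_I h0.le] using h1

theorem lintegral_unitDisc_eq_polar (g : ℂ → ℝ≥0∞) :
    ∫⁻ ζ in unitDisc, g ζ = ∫⁻ p in Ioo (0 : ℝ) 1 ×ˢ Ioo (-Real.pi) Real.pi,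
      ENNReal.ofReal p.1 * g (p.1 * cexp (p.2 * I)) := by
  rw [← lintegral_indicator measurableSet_unitDisc, ← Complex.lintegral_comp_polarCoord_symm,
    ← preimage_unitDisc_inter_polarCoord_target,
    ← setLIntegral_indicator (measurable_polarCoord_symm measurableSet_unitDisc)]
  simp only [← polarCoord_symm_eq_mul_exp]
  simp only [← smul_eq_mul, indicator_smul]
  rfl

theorem integral_unitDisc_eq_polar (g : ℂ → ℂ) :
    ∫ ζ in unitDisc, g ζ = ∫ p in Ioo (0 : ℝ) 1 ×ˢ Ioo (-Real.pi) Real.pi,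
      (p.1 : ℂ) * g (p.1 * cexp (p.2 * I)) := by
  rw [← integral_indicator measurableSet_unitDisc, ← Complex.integral_comp_polarCoord_symm,
    ← preimage_unitDisc_inter_polarCoord_target, inter_comm,
    ← setIntegral_indicator (measurable_polarCoord_symm measurableSet_unitDisc)]
  simp only [← polarCoord_symm_eq_mul_exp]
  simp only [← Complex.real_smul, indicator_smul]
  rfl

theorem lintegral_unitDisc_le_polar (g : ℂ → ℝ≥0∞) :
    ∫⁻ ζ in unitDisc, g ζ ≤ ∫⁻ s in Ioo (0 : ℝ) 1, ENNReal.ofReal s *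
      ∫⁻ θ in Ioo (-Real.pi) Real.pi, g (s * cexp (θ * I)) := by
  rw [lintegral_unitDisc_eq_polar, Measure.volume_eq_prod, ← Measure.prod_restrict]
  refine (lintegral_prod_le _).trans (lintegral_mono fun s => ?_)
  rw [lintegral_const_mul' _ _ ENNReal.ofReal_ne_top]

theorem quasiMeasurePreserving_norm_unitDisc :
    Measure.QuasiMeasurePreserving (fun ζ : ℂ => ‖ζ‖) (volume.restrict unitDisc)
      (volume.restrict (Ioo 0 1)) := by
  refine ⟨measurable_norm, Measure.AbsolutelyContinuous.mk fun U hU hU0 => ?_⟩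
  rw [Measure.map_apply measurable_norm hU,
    ← lintegral_indicator_one (measurable_norm hU), ← nonpos_iff_eq_zero]
  refine (lintegral_unitDisc_le_polar _).trans_eq ?_
  rw [lintegral_eq_zero_of_ae_eq_zero]
  filter_upwards [measure_eq_zero_iff_ae_notMem.1 hU0, ae_restrict_mem measurableSet_Ioo]
    with s hsU hs
  have hind : ∀ θ : ℝ,
      ((fun ζ : ℂ => ‖ζ‖) ⁻¹' U).indicator (1 : ℂ → ℝ≥0∞) (s * cexp (θ * I)) = 0 := fun θ =>
    indicator_of_notMem (by rwa [mem_preimage, norm_ofReal_mul_exp_mul_I hs.1.le]) _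
  simp only [hind, lintegral_zero, mul_zero, Pi.zero_apply]

/-! ### The power series of the Bergman projection -/

/-- The normalized moment `∫_𝔻 f(ζ) conj(ζ)^n ω(ζ) dA(ζ)`; the `n`-th Taylor coefficient of the
Bergman projection of `f` is this moment times `bergmanCoeff ω n`. -/
def discMoment (ω : ℝ → ℝ) (f : ℂ → ℂ) (n : ℕ) : ℂ :=
  (Real.pi : ℂ)⁻¹ * ∫ ζ in unitDisc, f ζ * ω ‖ζ‖ * starRingEnd ℂ ζ ^ n

theorem ae_norm_conj_le_one_unitDisc :
    ∀ᵐ ζ ∂volume.restrict unitDisc, ‖starRingEnd ℂ ζ‖ ≤ 1 := by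
  filter_upwards [ae_restrict_mem measurableSet_unitDisc] with ζ hζ
  rw [RCLike.norm_conj]
  exact (mem_unitDisc.1 hζ).le

section Disc

variable {φ : ℂ → ℂ} {c : ℕ → ℂ}

theorem hasSum_integral_unitDisc_mul_tsum (hφ : IntegrableOn φ unitDisc)
    (hc : Summable fun n => ‖c n‖) :
    HasSum (fun n => c n * ∫ ζ in unitDisc, φ ζ * starRingEnd ℂ ζ ^ n)
      (∫ ζ in unitDisc, φ ζ * ∑' n, c n * starRingEnd ℂ ζ ^ n) :=
  hasSum_integral_mul_tsum_mul_pow hφ Complex.continuous_conj.aestronglyMeasurable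
    ae_norm_conj_le_one_unitDisc hc

theorem integrableOn_unitDisc_mul_tsum (hφ : IntegrableOn φ unitDisc)
    (hc : Summable fun n => ‖c n‖) :
    IntegrableOn (fun ζ => φ ζ * ∑' n, c n * starRingEnd ℂ ζ ^ n) unitDisc := by
  have hcont : ContinuousOn (fun ζ : ℂ => ∑' n, c n * starRingEnd ℂ ζ ^ n) unitDisc :=
    (continuousOn_tsum_mul_pow hc).comp Complex.continuous_conj.continuousOn fun ζ hζ => by
      rw [mem_closedBall_zero_iff, RCLike.norm_conj]
      exact (mem_unitDisc.1 hζ).le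
  exact hφ.mul_bdd (hcont.aestronglyMeasurable measurableSet_unitDisc)
    (ae_norm_conj_le_one_unitDisc.mono fun ζ hζ => norm_tsum_mul_pow_le hc hζ)

theorem hasDerivAt_of_hasSum_mul_pow {F : ℂ → ℂ}
    (hF : ∀ w, ‖w‖ < 1 → HasSum (fun n => c n * w ^ n) (F w)) {z D : ℂ} (hz : ‖z‖ < 1)
    (hD : HasSum (fun n : ℕ => (n + 1) * c (n + 1) * z ^ n) D) : HasDerivAt F D z := by
  obtain ⟨ρ, hzρ, hρ1⟩ := exists_between hz
  have hρ0 : 0 ≤ ρ := (norm_nonneg z).trans hzρ.le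
  have hρ : ‖(ρ : ℂ)‖ = ρ := Complex.norm_of_nonneg hρ0
  have hzball : z ∈ Metric.ball (0 : ℂ) ρ := mem_ball_zero_iff.2 hzρ
  have hsum : Summable fun n => ‖c n * (ρ : ℂ) ^ n‖ := (hF ρ (by rwa [hρ])).summable.norm
  have hdiff (n : ℕ) : DifferentiableOn ℂ (fun w => c n * w ^ n) (Metric.ball 0 ρ) := by fun_prop
  have hbound (n : ℕ) (w : ℂ) (hw : w ∈ Metric.ball (0 : ℂ) ρ) :
      ‖c n * w ^ n‖ ≤ ‖c n * (ρ : ℂ) ^ n‖ := by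
    rw [norm_mul, norm_mul, norm_pow, norm_pow, hρ]
    gcongr
    exact (mem_ball_zero_iff.1 hw).le
  have hderiv : HasSum (fun n => deriv (fun w => c n * w ^ n) z)
      (deriv (fun w => ∑' n, c n * w ^ n) z) :=
    hasSum_deriv_of_summable_norm hsum hdiff Metric.isOpen_ball hbound hzball
  have htsum : F =ᶠ[nhds z] fun w => ∑' n, c n * w ^ n := by
    filter_upwards [Metric.isOpen_ball.mem_nhds hzball] with w hw
    exact (hF w ((mem_ball_zero_iff.1 hw).trans hρ1)).tsum_eq.symm
  have hDeq : D = deriv (fun w => ∑' n, c n * w ^ n) z := by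
    refine hD.unique ?_
    have hshift := (hasSum_nat_add_iff' 1).2 hderiv
    simp only [deriv_const_mul_field', deriv_pow_field, Finset.range_one, Finset.sum_singleton,
      Nat.cast_zero, zero_mul, mul_zero, sub_zero] at hshift
    refine hshift.congr_fun fun n => ?_
    rw [Nat.add_sub_cancel]
    push_cast
    ring
  rw [hDeq]
  exact ((differentiableOn_tsum_of_summable_norm hsum hdiff Metric.isOpen_ball
    hbound).differentiableAt (Metric.isOpen_ball.mem_nhds hzball)).hasDerivAt.congr_of_eventuallyEq
      htsum

end Disc

theorem bInt_eq_mul_tsum (ω : ℝ → ℝ) (f : ℂ → ℂ) (z ζ : ℂ) :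
    bInt ω f z ζ =
      f ζ * ω ‖ζ‖ * ∑' n : ℕ, (bergmanCoeff ω n : ℂ) * z ^ n * starRingEnd ℂ ζ ^ n := by
  rw [bInt, bKer_eq_tsum, Complex.conj_tsum, mul_right_comm]
  simp only [map_mul, map_pow, Complex.conj_conj, Complex.conj_ofReal, mul_pow, mul_assoc]

namespace IsRadialWeight

variable {ω : ℝ → ℝ} {f : ℂ → ℂ}

theorem integrableOn_bInt (hω : IsRadialWeight ω)
    (hf : IntegrableOn (fun ζ => f ζ * ω ‖ζ‖) unitDisc) {z : ℂ} (hz : ‖z‖ < 1) :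
    IntegrableOn (bInt ω f z) unitDisc :=
  (integrableOn_unitDisc_mul_tsum hf (hω.summable_norm_bergmanCoeff hz)).congr_fun
    (fun ζ _ => (bInt_eq_mul_tsum ω f z ζ).symm) measurableSet_unitDisc

theorem integrableOn_of_integrableOn_bInt_zero (hω : IsRadialWeight ω)
    (hf : IntegrableOn (bInt ω f 0) unitDisc) :
    IntegrableOn (fun ζ => f ζ * ω ‖ζ‖) unitDisc := by
  have hcoeff : (bergmanCoeff ω 0 : ℂ) ≠ 0 := ofReal_ne_zero.2 (hω.bergmanCoeff_pos 0).ne'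
  refine IntegrableOn.congr_fun (hf.mul_const (bergmanCoeff ω 0 : ℂ)⁻¹) (fun ζ _ => ?_)
    measurableSet_unitDisc
  have htsum : ∑' n : ℕ, (bergmanCoeff ω n : ℂ) * 0 ^ n * starRingEnd ℂ ζ ^ n =
      bergmanCoeff ω 0 := by
    rw [tsum_eq_single 0 fun n hn => by rw [zero_pow hn, mul_zero, zero_mul], pow_zero, pow_zero,
      mul_one, mul_one]
  simp only [bInt_eq_mul_tsum, htsum, mul_inv_cancel_right₀ hcoeff]

theorem hasSum_bProj (hω : IsRadialWeight ω)
    (hf : IntegrableOn (fun ζ => f ζ * ω ‖ζ‖) unitDisc) {z : ℂ} (hz : ‖z‖ < 1) :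
    HasSum (fun n => bergmanCoeff ω n * discMoment ω f n * z ^ n) (bProj ω f z) := by
  have h := (hasSum_integral_unitDisc_mul_tsum hf
    (hω.summable_norm_bergmanCoeff hz)).mul_left (Real.pi : ℂ)⁻¹
  simp only [bProj, bInt_eq_mul_tsum]
  refine h.congr_fun fun n => ?_
  rw [discMoment]
  ring

theorem hasDerivAt_bProj (hω : IsRadialWeight ω)
    (hf : IntegrableOn (fun ζ => f ζ * ω ‖ζ‖) unitDisc) {z : ℂ} (hz : ‖z‖ < 1) :
    HasDerivAt (bProj ω f) ((Real.pi : ℂ)⁻¹ * ∫ ζ in unitDisc,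
      f ζ * ω ‖ζ‖ * starRingEnd ℂ ζ * bergmanKerDeriv ω (z * starRingEnd ℂ ζ)) z := by
  refine hasDerivAt_of_hasSum_mul_pow (fun w hw => hω.hasSum_bProj hf hw) hz ?_
  have hf' : IntegrableOn (fun ζ => f ζ * ω ‖ζ‖ * starRingEnd ℂ ζ) unitDisc :=
    hf.mul_bdd Complex.continuous_conj.aestronglyMeasurable ae_norm_conj_le_one_unitDisc
  have h := (hasSum_integral_unitDisc_mul_tsum hf'
    (hω.summable_norm_bergmanKerDeriv hz)).mul_left (Real.pi : ℂ)⁻¹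
  simp only [bergmanKerDeriv, mul_pow, ← mul_assoc] at h ⊢
  refine h.congr_fun fun n => ?_
  simp only [discMoment, pow_succ', ← mul_assoc]
  push_cast
  ring

end IsRadialWeight

/-! ### Weighted integrals for weights in `Ď` -/

theorem div_rpow_neg_eq_mul {d K : ℝ} (hd : 0 ≤ d) (hK : 0 ≤ K) (ε : ℝ) :
    (d / K) ^ (-ε) = K ^ ε * d ^ (-ε) := by
  rw [Real.div_rpow hd hK, Real.rpow_neg hK, div_inv_eq_mul, mul_comm]

theorem lintegral_le_add_of_subset_union {α : Type*} [MeasurableSpace α] {μ : Measure α}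
    {g : α → ℝ≥0∞} {s t u : Set α} (h : s ⊆ t ∪ u) :
    ∫⁻ x in s, g x ∂μ ≤ ∫⁻ x in t, g x ∂μ + ∫⁻ x in u, g x ∂μ :=
  (lintegral_mono_set h).trans (lintegral_union_le g t u)

namespace IsRadialWeight

variable {ω : ℝ → ℝ} {ε K q : ℝ}

theorem lintegral_mul_le_tl_mul (hω : IsRadialWeight ω) {g : ℝ → ℝ} {a b M : ℝ}
    (ha : a ∈ Ico (0 : ℝ) 1) (hb : b ≤ 1) (hg : ∀ s ∈ Ico a b, g s ≤ M) (hM : 0 ≤ M) :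
    ∫⁻ s in Ico a b, ENNReal.ofReal (ω s * g s) ≤ ENNReal.ofReal (tl ω a * M) := by
  have hsub : Icc a 1 ⊆ Icc 0 1 := Icc_subset_Icc_left ha.1
  have hint : IntegrableOn (fun s => ω s * M) (Ioc a 1) :=
    ((hω.integrableOn_Icc.mono_set hsub).mono_set Ioc_subset_Icc_self).mul_const M
  have hnonneg : ∀ᵐ s ∂volume.restrict (Ioc a 1), 0 ≤ ω s * M := by
    rw [← restrict_Ioo_eq_restrict_Ioc]
    filter_upwards [ae_restrict_mem measurableSet_Ioo] with s hs
    exact mul_nonneg (hω.nonneg ⟨ha.1.trans hs.1.le, hs.2⟩) hM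
  calc ∫⁻ s in Ico a b, ENNReal.ofReal (ω s * g s)
      ≤ ∫⁻ s in Ico a b, ENNReal.ofReal (ω s * M) :=
        setLIntegral_mono' measurableSet_Ico fun s hs => ENNReal.ofReal_le_ofReal <|
          mul_le_mul_of_nonneg_left (hg s hs)
            (hω.nonneg ⟨ha.1.trans hs.1, hs.2.trans_le hb⟩)
    _ ≤ ∫⁻ s in Ico a 1, ENNReal.ofReal (ω s * M) := lintegral_mono_set (Ico_subset_Ico_right hb)
    _ = ∫⁻ s in Ioc a 1, ENNReal.ofReal (ω s * M) := by
        rw [restrict_Ico_eq_restrict_Ioc]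
    _ = ENNReal.ofReal (tl ω a * M) := by
        rw [← ofReal_integral_eq_lintegral_ofReal hint hnonneg, integral_mul_const, tl,
          intervalIntegral.integral_of_le ha.2.le]

theorem lintegral_Ico_mul_rpow_neg_le_of_le (hω : IsRadialWeight ω) (hε : 0 < ε) (hK : 1 < K)
    (hq : 1 < q) (hKq : K ^ ε = q)
    (hc : ∀ r ∈ Ico (0 : ℝ) 1, q ^ 2 * tl ω (1 - (1 - r) / K) ≤ tl ω r) {R : ℝ} (n : ℕ) :
    ∀ r ∈ Ico (0 : ℝ) 1, R ≤ 1 - (1 - r) / K ^ n →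
      ∫⁻ s in Ico r R, ENNReal.ofReal (ω s * (1 - s) ^ (-ε)) ≤
        ENNReal.ofReal (q ^ 2 / (q - 1) * (tl ω r * (1 - r) ^ (-ε))) := by
  have hK0 : 0 < K := one_pos.trans hK
  have hq1 : 0 < q - 1 := sub_pos.2 hq
  induction n with
  | zero =>
    intro r _ hR
    rw [pow_zero, div_one, sub_sub_cancel] at hR
    rw [Ico_eq_empty (not_lt.2 hR), Measure.restrict_empty, lintegral_zero_measure]
    exact zero_le
  | succ n ih =>
    intro r hr hR
    have hd : 0 < 1 - r := sub_pos.2 hr.2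
    set r' := 1 - (1 - r) / K with hr'
    have hr'mem : r' ∈ Ico (0 : ℝ) 1 := one_sub_div_mem_Ico hd (sub_le_self 1 hr.1) hK.le
    have hpow : (1 - r') ^ (-ε) = q * (1 - r) ^ (-ε) := by
      rw [hr', sub_sub_cancel, div_rpow_neg_eq_mul hd.le hK0.le, hKq]
    have hRn : R ≤ 1 - (1 - r') / K ^ n := by
      rwa [hr', sub_sub_cancel, div_div, ← pow_succ']
    have hfirst : ∫⁻ s in Ico r r', ENNReal.ofReal (ω s * (1 - s) ^ (-ε)) ≤
        ENNReal.ofReal (tl ω r * (1 - r') ^ (-ε)) := by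
      refine hω.lintegral_mul_le_tl_mul hr hr'mem.2.le (fun s hs => ?_)
        (Real.rpow_nonneg (sub_nonneg.2 hr'mem.2.le) _)
      exact Real.rpow_le_rpow_of_nonpos (sub_pos.2 hr'mem.2) (sub_le_sub_left hs.2.le 1)
        (neg_nonpos.2 hε.le)
    have := Real.rpow_nonneg hd.le (-ε)
    have htl := (hω.tl_pos hr).le
    have htl' := (hω.tl_pos hr'mem).le
    refine (lintegral_le_add_of_subset_union Ico_subset_Ico_union_Ico).trans
      ((add_le_add hfirst (ih r' hr'mem hRn)).trans ?_)
    rw [hpow, ← ENNReal.ofReal_add (by positivity) (by positivity)]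
    refine ENNReal.ofReal_le_ofReal ?_
    calc tl ω r * (q * (1 - r) ^ (-ε)) + q ^ 2 / (q - 1) * (tl ω r' * (q * (1 - r) ^ (-ε)))
        = q * (tl ω r + (q ^ 2 * tl ω r') / (q - 1)) * (1 - r) ^ (-ε) := by ring
      _ ≤ q * (tl ω r + tl ω r / (q - 1)) * (1 - r) ^ (-ε) := by gcongr; exact hc r hr
      _ = q ^ 2 / (q - 1) * (tl ω r * (1 - r) ^ (-ε)) := by field_simp; ring

theorem lintegral_Ico_mul_rpow_neg_le (hω : IsRadialWeight ω) (hε : 0 < ε) (hK : 1 < K)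
    (hq : 1 < q) (hKq : K ^ ε = q)
    (hc : ∀ r ∈ Ico (0 : ℝ) 1, q ^ 2 * tl ω (1 - (1 - r) / K) ≤ tl ω r) {r : ℝ}
    (hr : r ∈ Ico (0 : ℝ) 1) :
    ∫⁻ s in Ico r 1, ENNReal.ofReal (ω s * (1 - s) ^ (-ε)) ≤
      ENNReal.ofReal (q ^ 2 / (q - 1) * (tl ω r * (1 - r) ^ (-ε))) := by
  have hd : 0 < 1 - r := sub_pos.2 hr.2
  have hmono : Monotone fun n : ℕ => Ico r (1 - (1 - r) / K ^ n) := fun m n hmn =>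
    Ico_subset_Ico_right (by gcongr; exact hK.le)
  have hunion : Ico r 1 = ⋃ n : ℕ, Ico r (1 - (1 - r) / K ^ n) := by
    ext s
    simp only [mem_iUnion, mem_Ico, exists_and_left]
    refine and_congr_right fun _ =>
      ⟨fun hs => ?_, fun ⟨n, hn⟩ => hn.trans (sub_lt_self 1 (by positivity))⟩
    obtain ⟨n, hn⟩ := pow_unbounded_of_one_lt ((1 - r) / (1 - s)) hK
    refine ⟨n, lt_sub_comm.1 ?_⟩
    rwa [div_lt_comm₀ (by positivity) (sub_pos.2 hs)]
  rw [hunion, setLIntegral_iUnion_of_directed _ hmono.directed_le]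
  exact iSup_le fun n =>
    hω.lintegral_Ico_mul_rpow_neg_le_of_le hε hK hq hKq hc n r hr le_rfl

theorem lintegral_Ico_mul_rpow_neg_div_tl_le (hω : IsRadialWeight ω) (hε : 0 < ε) {a r D : ℝ}
    (ha : a ∈ Ico (0 : ℝ) 1) (hr : r ∈ Ico (0 : ℝ) 1) (hD : tl ω a ≤ D * tl ω r) :
    ∫⁻ s in Ico a r, ENNReal.ofReal (ω s * ((1 - s) ^ (-ε) / tl ω s)) ≤
      ENNReal.ofReal (D * (1 - r) ^ (-ε)) := by
  have htl := hω.tl_pos hr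
  have hd : 0 < 1 - r := sub_pos.2 hr.2
  have hrpow := Real.rpow_nonneg hd.le (-ε)
  refine (hω.lintegral_mul_le_tl_mul ha hr.2.le (M := (1 - r) ^ (-ε) / tl ω r) (fun s hs => ?_)
    (by positivity)).trans (ENNReal.ofReal_le_ofReal ?_)
  · have hsr := hs.2.le
    have htls : tl ω r ≤ tl ω s :=
      hω.tl_antitoneOn ⟨ha.1.trans hs.1, hsr.trans hr.2.le⟩ (Ico_subset_Icc_self hr) hsr
    exact div_le_div₀ hrpow (Real.rpow_le_rpow_of_nonpos hd (sub_le_sub_left hsr 1)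
      (neg_nonpos.2 hε.le)) htl htls
  · calc tl ω a * ((1 - r) ^ (-ε) / tl ω r) ≤ D * tl ω r * ((1 - r) ^ (-ε) / tl ω r) := by gcongr
      _ = D * (1 - r) ^ (-ε) := by field_simp

theorem tl_zero_le_mul_tl (hω : IsRadialWeight ω) (hK : 1 ≤ K) {D : ℝ} (hD0 : 0 ≤ D)
    (hD : ∀ d ∈ Ioc (0 : ℝ) 1, tl ω (1 - d) ≤ D * tl ω (1 - d / K)) {r : ℝ}
    (hr : r ∈ Ico (0 : ℝ) 1) (hKr : 1 ≤ K * (1 - r)) : tl ω 0 ≤ D * tl ω r := by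
  have h := hD 1 ⟨one_pos, le_rfl⟩
  rw [sub_self] at h
  refine h.trans (mul_le_mul_of_nonneg_left (hω.tl_antitoneOn (Ico_subset_Icc_self hr)
    (Ico_subset_Icc_self (one_sub_div_mem_Ico one_pos le_rfl hK)) ?_) hD0)
  rwa [le_sub_comm, div_le_iff₀' (one_pos.trans_le hK)]

theorem lintegral_Ico_zero_mul_rpow_neg_div_tl_le_of_one_le_mul (hω : IsRadialWeight ω)
    (hε : 0 < ε) (hK : 1 ≤ K) (hq : 1 < q) {D : ℝ} (hD0 : 0 ≤ D)
    (hD : ∀ d ∈ Ioc (0 : ℝ) 1, tl ω (1 - d) ≤ D * tl ω (1 - d / K)) {r : ℝ}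
    (hr : r ∈ Ico (0 : ℝ) 1) (hKr : 1 ≤ K * (1 - r)) :
    ∫⁻ s in Ico 0 r, ENNReal.ofReal (ω s * ((1 - s) ^ (-ε) / tl ω s)) ≤
      ENNReal.ofReal (D * q / (q - 1) * (1 - r) ^ (-ε)) := by
  refine (hω.lintegral_Ico_mul_rpow_neg_div_tl_le hε ⟨le_rfl, one_pos⟩ hr
    (hω.tl_zero_le_mul_tl hK hD0 hD hr hKr)).trans (ENNReal.ofReal_le_ofReal
      (mul_le_mul_of_nonneg_right ?_ (Real.rpow_nonneg (sub_nonneg.2 hr.2.le) _)))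
  rw [le_div_iff₀ (sub_pos.2 hq)]
  exact mul_le_mul_of_nonneg_left (sub_le_self q one_pos.le) hD0

theorem lintegral_Ico_zero_mul_rpow_neg_div_tl_le_of_le (hω : IsRadialWeight ω) (hε : 0 < ε)
    (hK : 1 < K) (hq : 1 < q) (hKq : K ^ ε = q) {D : ℝ} (hD0 : 0 ≤ D)
    (hD : ∀ d ∈ Ioc (0 : ℝ) 1, tl ω (1 - d) ≤ D * tl ω (1 - d / K)) (n : ℕ) :
    ∀ r ∈ Ico (0 : ℝ) 1, r ≤ 1 - 1 / K ^ n →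
      ∫⁻ s in Ico 0 r, ENNReal.ofReal (ω s * ((1 - s) ^ (-ε) / tl ω s)) ≤
        ENNReal.ofReal (D * q / (q - 1) * (1 - r) ^ (-ε)) := by
  have hK0 : 0 < K := one_pos.trans hK
  have hq1 : 0 < q - 1 := sub_pos.2 hq
  induction n with
  | zero =>
    intro r _ hr0
    rw [pow_zero, div_one, sub_self] at hr0
    rw [Ico_eq_empty (not_lt.2 hr0), Measure.restrict_empty, lintegral_zero_measure]
    exact zero_le
  | succ n ih =>
    intro r hr hrn
    have hd : 0 < 1 - r := sub_pos.2 hr.2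
    rcases le_or_gt (K * (1 - r)) 1 with hKr | hKr
    · set r' := 1 - K * (1 - r) with hr'
      have hr'mem : r' ∈ Ico (0 : ℝ) 1 := ⟨sub_nonneg.2 hKr, sub_lt_self 1 (by positivity)⟩
      have hr'n : r' ≤ 1 - 1 / K ^ n := by
        calc r' ≤ 1 - K * (1 / K ^ (n + 1)) := by rw [hr']; gcongr; linarith
          _ = 1 - 1 / K ^ n := by rw [pow_succ]; field_simp
      have hpow : (1 - r) ^ (-ε) = q * (1 - r') ^ (-ε) := by
        rw [hr', sub_sub_cancel, ← hKq, ← div_rpow_neg_eq_mul (by positivity) hK0.le,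
          mul_div_cancel_left₀ _ hK0.ne']
      have htl : tl ω r' ≤ D * tl ω r := by
        have h := hD (K * (1 - r)) ⟨by positivity, hKr⟩
        rwa [mul_div_cancel_left₀ _ hK0.ne', sub_sub_cancel] at h
      have hrpow' := Real.rpow_nonneg (sub_nonneg.2 hr'mem.2.le) (-ε)
      refine (lintegral_le_add_of_subset_union Ico_subset_Ico_union_Ico).trans ((add_le_add
        (ih r' hr'mem hr'n) (hω.lintegral_Ico_mul_rpow_neg_div_tl_le hε hr'mem hr htl)).trans ?_)
      rw [← ENNReal.ofReal_add (by positivity) (by positivity), hpow]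
      refine (congrArg ENNReal.ofReal ?_).le
      field_simp
      ring
    · exact hω.lintegral_Ico_zero_mul_rpow_neg_div_tl_le_of_one_le_mul hε hK.le hq hD0 hD hr hKr.le

theorem lintegral_Ico_zero_mul_rpow_neg_div_tl_le (hω : IsRadialWeight ω) (hε : 0 < ε)
    (hK : 1 < K) (hq : 1 < q) (hKq : K ^ ε = q) {D : ℝ} (hD0 : 0 ≤ D)
    (hD : ∀ d ∈ Ioc (0 : ℝ) 1, tl ω (1 - d) ≤ D * tl ω (1 - d / K)) {r : ℝ}
    (hr : r ∈ Ico (0 : ℝ) 1) :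
    ∫⁻ s in Ico 0 r, ENNReal.ofReal (ω s * ((1 - s) ^ (-ε) / tl ω s)) ≤
      ENNReal.ofReal (D * q / (q - 1) * (1 - r) ^ (-ε)) := by
  have hd : 0 < 1 - r := sub_pos.2 hr.2
  obtain ⟨n, hn⟩ := pow_unbounded_of_one_lt (1 / (1 - r)) hK
  refine hω.lintegral_Ico_zero_mul_rpow_neg_div_tl_le_of_le hε hK hq hKq hD0 hD n r hr ?_
  rw [le_sub_comm]
  exact ((div_lt_comm₀ hd (pow_pos (one_pos.trans hK) n)).1 hn).le

theorem tl_le_tl_mul (hω : IsRadialWeight ω) {r s t : ℝ} (hr : r ∈ Ico (0 : ℝ) 1)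
    (hs : s ∈ Ico (0 : ℝ) 1) (ht : t ∈ Ico (0 : ℝ) 1) (h : r * s ≤ t) :
    tl ω t ≤ tl ω (r * s) :=
  hω.tl_antitoneOn ⟨mul_nonneg hr.1 hs.1, mul_le_one₀ hr.2.le hs.1 hs.2.le⟩
    (Ico_subset_Icc_self ht) h

theorem lintegral_Ico_zero_mul_rpow_neg_div_tl_mul_le (hω : IsRadialWeight ω) (hε : 0 < ε)
    (hK : 1 < K) (hq : 1 < q) (hKq : K ^ ε = q) {D : ℝ} (hD0 : 0 ≤ D)
    (hD : ∀ d ∈ Ioc (0 : ℝ) 1, tl ω (1 - d) ≤ D * tl ω (1 - d / K)) {r : ℝ}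
    (hr : r ∈ Ico (0 : ℝ) 1) :
    ∫⁻ s in Ico 0 r, ENNReal.ofReal (ω s * ((1 - s) ^ (-ε) / tl ω (r * s))) ≤
      ENNReal.ofReal (D * q / (q - 1) * (1 - r) ^ (-ε)) := by
  refine (setLIntegral_mono' measurableSet_Ico fun s hs => ENNReal.ofReal_le_ofReal ?_).trans
    (hω.lintegral_Ico_zero_mul_rpow_neg_div_tl_le hε hK hq hKq hD0 hD hr)
  have hs' : s ∈ Ico (0 : ℝ) 1 := ⟨hs.1, hs.2.trans hr.2⟩
  exact mul_le_mul_of_nonneg_left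
    (div_le_div_of_nonneg_left (Real.rpow_nonneg (sub_pos.2 hs'.2).le _) (hω.tl_pos hs')
      (hω.tl_le_tl_mul hr hs' hs' (mul_le_of_le_one_left hs.1 hr.2.le))) (hω.nonneg hs')

theorem lintegral_Ico_mul_rpow_neg_div_tl_mul_le (hω : IsRadialWeight ω) (hε : 0 < ε)
    (hK : 1 < K) (hq : 1 < q) (hKq : K ^ ε = q)
    (hc : ∀ r ∈ Ico (0 : ℝ) 1, q ^ 2 * tl ω (1 - (1 - r) / K) ≤ tl ω r) {r : ℝ}
    (hr : r ∈ Ico (0 : ℝ) 1) :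
    ∫⁻ s in Ico r 1, ENNReal.ofReal (ω s * ((1 - s) ^ (-ε) / tl ω (r * s))) ≤
      ENNReal.ofReal (q ^ 2 / (q - 1) * (1 - r) ^ (-ε)) := by
  have htl := hω.tl_pos hr
  calc ∫⁻ s in Ico r 1, ENNReal.ofReal (ω s * ((1 - s) ^ (-ε) / tl ω (r * s)))
      ≤ ∫⁻ s in Ico r 1, ENNReal.ofReal (1 / tl ω r) * ENNReal.ofReal (ω s * (1 - s) ^ (-ε)) := by
        refine setLIntegral_mono' measurableSet_Ico fun s hs => ?_
        have hs' : s ∈ Ico (0 : ℝ) 1 := ⟨hr.1.trans hs.1, hs.2⟩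
        rw [← ENNReal.ofReal_mul (by positivity), one_div_mul_eq_div, ← mul_div_assoc]
        exact ENNReal.ofReal_le_ofReal (div_le_div_of_nonneg_left
          (mul_nonneg (hω.nonneg hs') (Real.rpow_nonneg (sub_pos.2 hs.2).le _)) htl
          (hω.tl_le_tl_mul hr hs' hr (mul_le_of_le_one_right hr.1 hs.2.le)))
    _ ≤ ENNReal.ofReal (1 / tl ω r) *
          ENNReal.ofReal (q ^ 2 / (q - 1) * (tl ω r * (1 - r) ^ (-ε))) := by
        rw [lintegral_const_mul' _ _ ENNReal.ofReal_ne_top]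
        gcongr
        exact hω.lintegral_Ico_mul_rpow_neg_le hε hK hq hKq hc hr
    _ = ENNReal.ofReal (q ^ 2 / (q - 1) * (1 - r) ^ (-ε)) := by
        rw [← ENNReal.ofReal_mul (by positivity)]
        congr 1
        field_simp

theorem exists_lintegral_mul_rpow_neg_div_tl_mul_le (hω : IsRadialWeight ω) (hD : Dhat ω)
    (hc : Dcheck ω) :
    ∃ ε E : ℝ, 0 < ε ∧ 0 < E ∧ ∀ r ∈ Ico (0 : ℝ) 1,
      ∫⁻ s in Ico 0 1, ENNReal.ofReal (ω s * ((1 - s) ^ (-ε) / tl ω (r * s))) ≤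
        ENNReal.ofReal (E * (1 - r) ^ (-ε)) := by
  obtain ⟨K, c, hK, hc1, hcK⟩ := hc
  obtain ⟨D, hD1, hDK⟩ := hω.exists_tl_le_of_dhat hD hK.le
  have hq : 1 < √c := Real.lt_sqrt_of_sq_lt (by rwa [one_pow])
  have hKq : K ^ Real.logb K √c = √c :=
    Real.rpow_logb (one_pos.trans hK) hK.ne' (one_pos.trans hq)
  refine ⟨Real.logb K √c, D * √c / (√c - 1) + √c ^ 2 / (√c - 1), Real.logb_pos hK hq,
    by positivity, fun r hr => ?_⟩
  have hrpow := Real.rpow_nonneg (sub_pos.2 hr.2).le (-Real.logb K √c)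
  refine (lintegral_le_add_of_subset_union Ico_subset_Ico_union_Ico).trans ((add_le_add
    (hω.lintegral_Ico_zero_mul_rpow_neg_div_tl_mul_le (Real.logb_pos hK hq) hK hq hKq
      (one_pos.trans_le hD1).le hDK hr)
    (hω.lintegral_Ico_mul_rpow_neg_div_tl_mul_le (Real.logb_pos hK hq) hK hq hKq ?_
      hr)).trans_eq ?_)
  · rwa [Real.sq_sqrt (one_pos.trans hc1).le]
  · rw [← ENNReal.ofReal_add (by positivity) (by positivity), add_mul]

end IsRadialWeight

/-! ### Growth of the Bergman projection -/

theorem norm_integral_le_of_lintegral_norm_le {α E : Type*} [MeasurableSpace α] {μ : Measure α}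
    [NormedAddCommGroup E] [NormedSpace ℝ E] {g : α → E} {c : ℝ} (hc : 0 ≤ c)
    (hg : ∫⁻ x, ENNReal.ofReal ‖g x‖ ∂μ ≤ ENNReal.ofReal c) : ‖∫ x, g x ∂μ‖ ≤ c :=
  (norm_integral_le_lintegral_norm g).trans (ENNReal.toReal_le_of_le_ofReal hc hg)

theorem hasDerivAt_comp_ofReal_mul_const {F : ℂ → ℂ} {D z : ℂ} {t : ℝ}
    (hF : HasDerivAt F D (t * z)) : HasDerivAt (fun t : ℝ => F (t * z)) (D * z) t := by
  have hmul : HasDerivAt (fun t : ℝ => (t : ℂ) * z) z t := by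
    simpa only [ofReal_one, one_mul, id_eq] using ((hasDerivAt_id t).ofReal_comp).mul_const z
  exact HasDerivAt.comp (h₂ := F) t hF hmul

theorem hasDerivAt_one_sub_mul_rpow_neg {ε c t : ℝ} (ht : 1 - t * c ≠ 0) :
    HasDerivAt (fun t : ℝ => (1 - t * c) ^ (-ε)) (ε * c * (1 - t * c) ^ (-ε - 1)) t := by
  have hlin : HasDerivAt (fun t : ℝ => 1 - t * c) (-c) t := by
    simpa only [one_mul, id_eq] using ((hasDerivAt_id t).mul_const c).const_sub 1
  refine (hlin.rpow_const (Or.inl ht)).congr_deriv ?_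
  ring

theorem norm_le_add_of_norm_deriv_le_rpow {F F' : ℂ → ℂ} {ε D : ℝ} (hε : 0 < ε)
    (hF : ∀ w, ‖w‖ < 1 → HasDerivAt F (F' w) w)
    (hF' : ∀ w, ‖w‖ < 1 → ‖F' w‖ ≤ D * (1 - ‖w‖) ^ (-ε - 1)) {z : ℂ} (hz : ‖z‖ < 1) :
    ‖F z‖ ≤ ‖F 0‖ + D / ε * (1 - ‖z‖) ^ (-ε) := by
  have hD : 0 ≤ D := by simpa using (norm_nonneg _).trans (hF' 0 (by simp))
  have hnorm : ∀ t ∈ Icc (0 : ℝ) 1, ‖(t : ℂ) * z‖ = t * ‖z‖ := fun t ht => by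
    rw [norm_mul, Complex.norm_of_nonneg ht.1]
  have hlt : ∀ t ∈ Icc (0 : ℝ) 1, ‖(t : ℂ) * z‖ < 1 := fun t ht => by
    rw [hnorm t ht]
    exact (mul_le_of_le_one_left (norm_nonneg _) ht.2).trans_lt hz
  have hray : ∀ t ∈ Icc (0 : ℝ) 1, HasDerivAt (fun t : ℝ => F (t * z)) (F' (t * z) * z) t :=
    fun t ht => hasDerivAt_comp_ofReal_mul_const (hF _ (hlt t ht))
  have hmajorant : ∀ t ∈ Icc (0 : ℝ) 1,
      HasDerivAt (fun t : ℝ => ‖F 0‖ + D / ε * ((1 - t * ‖z‖) ^ (-ε) - 1))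
        (D / ε * (ε * ‖z‖ * (1 - t * ‖z‖) ^ (-ε - 1))) t := fun t ht =>
    (((hasDerivAt_one_sub_mul_rpow_neg (sub_pos.2 (hnorm t ht ▸ hlt t ht)).ne').sub_const
      1).const_mul (D / ε)).const_add ‖F 0‖
  have hbound := image_norm_le_of_norm_deriv_right_le_deriv_boundary'
    (fun t ht => (hray t ht).continuousAt.continuousWithinAt)
    (fun t ht => (hray t (Ico_subset_Icc_self ht)).hasDerivWithinAt) (by simp)
    (fun t ht => (hmajorant t ht).continuousAt.continuousWithinAt)
    (fun t ht => (hmajorant t (Ico_subset_Icc_self ht)).hasDerivWithinAt)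
    (fun t ht => by
      rw [norm_mul, ← hnorm t (Ico_subset_Icc_self ht), mul_assoc ε, div_mul_eq_mul_div,
        mul_left_comm D ε, mul_div_cancel_left₀ _ hε.ne', mul_comm ‖z‖, ← mul_assoc]
      exact mul_le_mul_of_nonneg_right (hF' _ (hlt t (Ico_subset_Icc_self ht))) (norm_nonneg _))
    (right_mem_Icc.2 zero_le_one)
  rw [ofReal_one, one_mul, one_mul] at hbound
  refine hbound.trans (add_le_add_right (mul_le_mul_of_nonneg_left ?_ (by positivity)) _)
  exact sub_le_self _ zero_le_one

theorem norm_bergmanKerDeriv_conj (ω : ℝ → ℝ) (w : ℂ) :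
    ‖bergmanKerDeriv ω (starRingEnd ℂ w)‖ = ‖bergmanKerDeriv ω w‖ := by
  rw [← RCLike.norm_conj, bergmanKerDeriv, bergmanKerDeriv, Complex.conj_tsum]
  simp only [map_mul, map_pow, Complex.conj_conj, Complex.conj_ofReal]

namespace IsRadialWeight

variable {ω : ℝ → ℝ} {f : ℂ → ℂ} {ε S : ℝ}

theorem lintegral_norm_bergmanKerDeriv (hω : IsRadialWeight ω) {q : ℂ} (hq : ‖q‖ < 1) :
    ∫⁻ θ in Ioo (-Real.pi) Real.pi, ENNReal.ofReal ‖bergmanKerDeriv ω (q * cexp (θ * I))‖ =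
      ENNReal.ofReal (∫ θ in -Real.pi..Real.pi, ‖bergmanKerDeriv ω (q * cexp (θ * I))‖) := by
  have hcont : Continuous fun θ : ℝ => ‖bergmanKerDeriv ω (q * cexp (θ * I))‖ := by
    simp only [bergmanKerDeriv, mul_pow, ← mul_assoc]
    exact (continuous_tsum_mul_exp_pow (hω.summable_norm_bergmanKerDeriv hq)).norm
  rw [intervalIntegral.integral_of_le (neg_le_self Real.pi_pos.le), integral_Ioc_eq_integral_Ioo,
    ofReal_integral_eq_lintegral_ofReal (hcont.integrableOn_Icc.mono_set Ioo_subset_Icc_self)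
      (Filter.Eventually.of_forall fun _ => norm_nonneg _)]

theorem aestronglyMeasurable_ofReal_comp_norm (hω : IsRadialWeight ω) :
    AEStronglyMeasurable (fun ζ : ℂ => (ω ‖ζ‖ : ℂ)) (volume.restrict unitDisc) :=
  Complex.continuous_ofReal.comp_aestronglyMeasurable
    ((hω.2.1.mono_set Ioo_subset_Ico_self).aestronglyMeasurable.comp_quasiMeasurePreserving
      quasiMeasurePreserving_norm_unitDisc)

theorem lintegral_unitDisc_norm_mul_mul_le (hω : IsRadialWeight ω) (hS : 0 ≤ S)
    (hf : ∀ᵐ ζ ∂volume.restrict unitDisc, ‖f ζ‖ ≤ S * (1 - ‖ζ‖) ^ (-ε)) {N J ρ : ℝ} (hN : 0 ≤ N)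
    {Φ : ℂ → ℝ≥0∞} (hΦ : ∀ s ∈ Ioo (0 : ℝ) 1,
      ∫⁻ θ in Ioo (-Real.pi) Real.pi, Φ (s * cexp (θ * I)) ≤ ENNReal.ofReal (N / tl ω (ρ * s)))
    (hJ : ∫⁻ s in Ico 0 1, ENNReal.ofReal (ω s * ((1 - s) ^ (-ε) / tl ω (ρ * s))) ≤
      ENNReal.ofReal J) :
    ∫⁻ ζ in unitDisc, ENNReal.ofReal ‖f ζ * ω ‖ζ‖‖ * Φ ζ ≤ ENNReal.ofReal (S * N * J) := by
  calc ∫⁻ ζ in unitDisc, ENNReal.ofReal ‖f ζ * ω ‖ζ‖‖ * Φ ζ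
      ≤ ∫⁻ ζ in unitDisc, ENNReal.ofReal (S * (1 - ‖ζ‖) ^ (-ε) * ω ‖ζ‖) * Φ ζ := by
        refine lintegral_mono_ae ?_
        filter_upwards [hf, ae_restrict_mem measurableSet_unitDisc] with ζ hfζ hζ
        have hωζ : 0 ≤ ω ‖ζ‖ := hω.nonneg ⟨norm_nonneg ζ, mem_unitDisc.1 hζ⟩
        rw [norm_mul, Complex.norm_of_nonneg hωζ]
        gcongr
    _ ≤ ∫⁻ s in Ioo (0 : ℝ) 1, ENNReal.ofReal s * ∫⁻ θ in Ioo (-Real.pi) Real.pi,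
          ENNReal.ofReal (S * (1 - ‖(s : ℂ) * cexp (θ * I)‖) ^ (-ε) *
            ω ‖(s : ℂ) * cexp (θ * I)‖) * Φ (s * cexp (θ * I)) :=
        lintegral_unitDisc_le_polar _
    _ ≤ ∫⁻ s in Ioo (0 : ℝ) 1, ENNReal.ofReal (S * N) *
          ENNReal.ofReal (ω s * ((1 - s) ^ (-ε) / tl ω (ρ * s))) := by
        refine setLIntegral_mono' measurableSet_Ioo fun s hs => ?_
        have hωs : 0 ≤ ω s := hω.nonneg (Ioo_subset_Ico_self hs)
        have hrpow : 0 ≤ (1 - s) ^ (-ε) := Real.rpow_nonneg (sub_pos.2 hs.2).le _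
        simp only [norm_ofReal_mul_exp_mul_I hs.1.le]
        rw [lintegral_const_mul' _ _ ENNReal.ofReal_ne_top]
        refine (mul_le_of_le_one_left zero_le (ENNReal.ofReal_le_one.2 hs.2.le)).trans
          ((mul_le_mul_right (hΦ s hs) _).trans_eq ?_)
        rw [← ENNReal.ofReal_mul (by positivity), ← ENNReal.ofReal_mul (by positivity)]
        congr 1
        ring
    _ ≤ ENNReal.ofReal (S * N * J) := by
        rw [lintegral_const_mul' _ _ ENNReal.ofReal_ne_top,
          ENNReal.ofReal_mul (p := S * N) (by positivity)]
        gcongr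
        exact (lintegral_mono_set Ioo_subset_Ico_self).trans hJ

theorem lintegral_unitDisc_norm_mul_le (hω : IsRadialWeight ω) (hS : 0 ≤ S)
    (hf : ∀ᵐ ζ ∂volume.restrict unitDisc, ‖f ζ‖ ≤ S * (1 - ‖ζ‖) ^ (-ε)) {J : ℝ}
    (hJ : ∫⁻ s in Ico 0 1, ENNReal.ofReal (ω s * ((1 - s) ^ (-ε) / tl ω (0 * s))) ≤
      ENNReal.ofReal J) :
    ∫⁻ ζ in unitDisc, ENNReal.ofReal ‖f ζ * ω ‖ζ‖‖ ≤
      ENNReal.ofReal (S * (2 * Real.pi * tl ω 0) * J) := by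
  have htl : 0 < tl ω 0 := hω.tl_pos (left_mem_Ico.2 one_pos)
  have hlength : ∀ s ∈ Ioo (0 : ℝ) 1, ∫⁻ _ in Ioo (-Real.pi) Real.pi, 1 ≤
      ENNReal.ofReal (2 * Real.pi * tl ω 0 / tl ω (0 * s)) := fun s _ => by
    rw [setLIntegral_one, Real.volume_Ioo, zero_mul, mul_div_cancel_right₀ _ htl.ne',
      sub_neg_eq_add, two_mul]
  simpa only [mul_one] using hω.lintegral_unitDisc_norm_mul_mul_le hS hf
    (mul_nonneg Real.two_pi_pos.le htl.le) (Φ := fun _ => 1) hlength hJ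

theorem lintegral_unitDisc_norm_mul_bergmanKerDeriv_le (hω : IsRadialWeight ω) (hS : 0 ≤ S)
    (hf : ∀ᵐ ζ ∂volume.restrict unitDisc, ‖f ζ‖ ≤ S * (1 - ‖ζ‖) ^ (-ε)) {B J : ℝ} (hB0 : 0 ≤ B)
    (hB : ∀ q : ℂ, ‖q‖ < 1 → ∫ θ in -Real.pi..Real.pi, ‖bergmanKerDeriv ω (q * cexp (θ * I))‖ ≤
      B / ((1 - ‖q‖) * tl ω ‖q‖)) {z : ℂ} (hz : ‖z‖ < 1)
    (hJ : ∫⁻ s in Ico 0 1, ENNReal.ofReal (ω s * ((1 - s) ^ (-ε) / tl ω (‖z‖ * s))) ≤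
      ENNReal.ofReal J) :
    ∫⁻ ζ in unitDisc, ENNReal.ofReal
        ‖f ζ * ω ‖ζ‖ * starRingEnd ℂ ζ * bergmanKerDeriv ω (z * starRingEnd ℂ ζ)‖ ≤
      ENNReal.ofReal (S * (B / (1 - ‖z‖)) * J) := by
  have hz1 : 0 < 1 - ‖z‖ := sub_pos.2 hz
  have hcircle : ∀ s ∈ Ioo (0 : ℝ) 1, ∫⁻ θ in Ioo (-Real.pi) Real.pi, ENNReal.ofReal
        ‖bergmanKerDeriv ω (z * starRingEnd ℂ ((s : ℂ) * cexp (θ * I)))‖ ≤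
      ENNReal.ofReal (B / (1 - ‖z‖) / tl ω (‖z‖ * s)) := fun s hs => by
    have hnorm : ‖starRingEnd ℂ z * s‖ = ‖z‖ * s := by
      rw [norm_mul, RCLike.norm_conj, Complex.norm_of_nonneg hs.1.le]
    have hle : ‖z‖ * s ≤ ‖z‖ := mul_le_of_le_one_right (norm_nonneg z) hs.2.le
    have htl : 0 < tl ω (‖z‖ * s) :=
      hω.tl_pos ⟨mul_nonneg (norm_nonneg z) hs.1.le, hle.trans_lt hz⟩
    have hconj : ∀ θ : ℝ, ‖bergmanKerDeriv ω (z * starRingEnd ℂ ((s : ℂ) * cexp (θ * I)))‖ =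
        ‖bergmanKerDeriv ω (starRingEnd ℂ z * s * cexp (θ * I))‖ := fun θ => by
      rw [← norm_bergmanKerDeriv_conj, map_mul, Complex.conj_conj, mul_assoc]
    simp only [hconj]
    rw [hω.lintegral_norm_bergmanKerDeriv (hnorm.trans_le hle |>.trans_lt hz)]
    refine ENNReal.ofReal_le_ofReal ((hB _ (hnorm.trans_le hle |>.trans_lt hz)).trans ?_)
    rw [hnorm, div_div]
    gcongr
  refine (lintegral_mono_ae ?_).trans (hω.lintegral_unitDisc_norm_mul_mul_le hS hf
    (div_nonneg hB0 hz1.le)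
    (Φ := fun ζ => ENNReal.ofReal ‖bergmanKerDeriv ω (z * starRingEnd ℂ ζ)‖) hcircle hJ)
  filter_upwards [ae_norm_conj_le_one_unitDisc] with ζ hζ
  rw [← ENNReal.ofReal_mul (norm_nonneg _), norm_mul, norm_mul _ (starRingEnd ℂ ζ)]
  gcongr
  exact mul_le_of_le_one_right (norm_nonneg _) hζ

theorem norm_bProj_zero_le (hω : IsRadialWeight ω)
    (hf : IntegrableOn (fun ζ => f ζ * ω ‖ζ‖) unitDisc) {c : ℝ}
    (hc : ‖∫ ζ in unitDisc, f ζ * ω ‖ζ‖‖ ≤ c) :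
    ‖bProj ω f 0‖ ≤ bergmanCoeff ω 0 * (Real.pi⁻¹ * c) := by
  have hvalue : bProj ω f 0 = bergmanCoeff ω 0 * discMoment ω f 0 := by
    refine (hω.hasSum_bProj hf (norm_zero.trans_lt one_pos)).unique ?_
    have h := hasSum_single (f := fun n => bergmanCoeff ω n * discMoment ω f n * (0 : ℂ) ^ n) 0
      fun n hn => by rw [zero_pow hn, mul_zero]
    rwa [pow_zero, mul_one] at h
  rw [hvalue, norm_mul, Complex.norm_of_nonneg (hω.bergmanCoeff_pos 0).le, discMoment, norm_mul,
    norm_inv, Complex.norm_of_nonneg Real.pi_pos.le]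
  simp only [pow_zero, mul_one]
  have := (hω.bergmanCoeff_pos 0).le
  gcongr

theorem norm_inv_pi_mul_integral_mul_bergmanKerDeriv_le (hω : IsRadialWeight ω) (hS : 0 ≤ S)
    (hf : ∀ᵐ ζ ∂volume.restrict unitDisc, ‖f ζ‖ ≤ S * (1 - ‖ζ‖) ^ (-ε)) {B E : ℝ} (hB0 : 0 ≤ B)
    (hB : ∀ q : ℂ, ‖q‖ < 1 → ∫ θ in -Real.pi..Real.pi, ‖bergmanKerDeriv ω (q * cexp (θ * I))‖ ≤
      B / ((1 - ‖q‖) * tl ω ‖q‖)) (hE : 0 ≤ E) {w : ℂ} (hw : ‖w‖ < 1)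
    (hJ : ∫⁻ s in Ico 0 1, ENNReal.ofReal (ω s * ((1 - s) ^ (-ε) / tl ω (‖w‖ * s))) ≤
      ENNReal.ofReal (E * (1 - ‖w‖) ^ (-ε))) :
    ‖(Real.pi : ℂ)⁻¹ * ∫ ζ in unitDisc,
        f ζ * ω ‖ζ‖ * starRingEnd ℂ ζ * bergmanKerDeriv ω (w * starRingEnd ℂ ζ)‖ ≤
      Real.pi⁻¹ * B * E * S * (1 - ‖w‖) ^ (-ε - 1) := by
  have hw1 : 0 < 1 - ‖w‖ := sub_pos.2 hw
  have h := norm_integral_le_of_lintegral_norm_le (by positivity)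
    (hω.lintegral_unitDisc_norm_mul_bergmanKerDeriv_le hS hf hB0 hB hw hJ)
  rw [norm_mul, norm_inv, Complex.norm_of_nonneg Real.pi_pos.le, Real.rpow_sub_one hw1.ne']
  exact (mul_le_mul_of_nonneg_left h (by positivity)).trans_eq (by ring)

theorem exists_norm_bProj_le (hω : IsRadialWeight ω) (hD : Dhat ω) (hc : Dcheck ω) :
    ∃ ε M : ℝ, 0 < ε ∧ 0 < M ∧ ∀ (f : ℂ → ℂ) (S : ℝ), 0 ≤ S →
      AEStronglyMeasurable f (volume.restrict unitDisc) →
      (∀ᵐ ζ ∂volume.restrict unitDisc, ‖f ζ‖ ≤ S * (1 - ‖ζ‖) ^ (-ε)) →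
      IntegrableOn (fun ζ => f ζ * ω ‖ζ‖) unitDisc ∧
        ∀ z, ‖z‖ < 1 → ‖bProj ω f z‖ ≤ M * S * (1 - ‖z‖) ^ (-ε) := by
  obtain ⟨ε, E, hε, hE, hJ⟩ := hω.exists_lintegral_mul_rpow_neg_div_tl_mul_le hD hc
  obtain ⟨B, hB0, hB⟩ := hω.exists_integral_norm_bergmanKerDeriv_le_of_dhat hD
  have htl : 0 < tl ω 0 := hω.tl_pos (left_mem_Ico.2 one_pos)
  have hcoeff : 0 < bergmanCoeff ω 0 := hω.bergmanCoeff_pos 0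
  refine ⟨ε, bergmanCoeff ω 0 * (2 * tl ω 0 * E) + Real.pi⁻¹ * B * E / ε, hε, by positivity,
    fun f S hS hfm hf => ?_⟩
  have hmass := hω.lintegral_unitDisc_norm_mul_le hS hf (hJ 0 (left_mem_Ico.2 one_pos))
  rw [sub_zero, Real.one_rpow, mul_one] at hmass
  have hint : IntegrableOn (fun ζ => f ζ * ω ‖ζ‖) unitDisc :=
    ⟨hfm.mul hω.aestronglyMeasurable_ofReal_comp_norm,
      hasFiniteIntegral_iff_norm _ |>.2 (hmass.trans_lt ENNReal.ofReal_lt_top)⟩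
  have hzero := hω.norm_bProj_zero_le hint
    (norm_integral_le_of_lintegral_norm_le (by positivity) hmass)
  refine ⟨hint, fun z hz => ?_⟩
  have hderiv := fun (w : ℂ) (hw : ‖w‖ < 1) =>
    hω.norm_inv_pi_mul_integral_mul_bergmanKerDeriv_le hS hf hB0.le hB hE.le hw
      (hJ ‖w‖ ⟨norm_nonneg w, hw⟩)
  have hone : 1 ≤ (1 - ‖z‖) ^ (-ε) := Real.one_le_rpow_of_pos_of_le_one_of_nonpos (sub_pos.2 hz)
    (sub_le_self _ (norm_nonneg z)) (neg_nonpos.2 hε.le)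
  calc ‖bProj ω f z‖
      ≤ ‖bProj ω f 0‖ + Real.pi⁻¹ * B * E * S / ε * (1 - ‖z‖) ^ (-ε) :=
        norm_le_add_of_norm_deriv_le_rpow hε (fun w hw => hω.hasDerivAt_bProj hint hw) hderiv hz
    _ ≤ bergmanCoeff ω 0 * (Real.pi⁻¹ * (S * (2 * Real.pi * tl ω 0) * E)) * (1 - ‖z‖) ^ (-ε) +
          Real.pi⁻¹ * B * E * S / ε * (1 - ‖z‖) ^ (-ε) := by
        gcongr
        exact hzero.trans (le_mul_of_one_le_right (by positivity) hone)
    _ = (bergmanCoeff ω 0 * (2 * tl ω 0 * E) + Real.pi⁻¹ * B * E / ε) * S * (1 - ‖z‖) ^ (-ε) := by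
        field_simp

end IsRadialWeight

/-! ### Sufficiency: standard weights -/

/-- The standard radial weight of exponent `ε - 1`, normalized so that its tail at `r` is
`(1 - r) ^ ε`. -/
def standardWeight (ε s : ℝ) : ℝ := ε * (1 - s) ^ (ε - 1)

theorem tl_standardWeight {ε : ℝ} (hε : 0 < ε) (r : ℝ) :
    tl (standardWeight ε) r = (1 - r) ^ ε := by
  simp only [tl, standardWeight]
  rw [intervalIntegral.integral_const_mul,
    intervalIntegral.integral_comp_sub_left (fun s => s ^ (ε - 1)),
    integral_rpow (Or.inl (by linarith)), sub_self, sub_add_cancel, Real.zero_rpow hε.ne', sub_zero,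
    mul_div_cancel₀ _ hε.ne']

theorem isRadialWeight_standardWeight {ε : ℝ} (hε : 0 < ε) :
    IsRadialWeight (standardWeight ε) := by
  refine ⟨fun s hs => mul_nonneg hε.le (Real.rpow_nonneg (sub_pos.2 hs.2).le _), ?_, fun r hr => ?_⟩
  · have hint : IntervalIntegrable (fun s : ℝ => s ^ (ε - 1)) volume 0 1 :=
      intervalIntegral.intervalIntegrable_rpow' (by linarith)
    have h := ((hint.comp_sub_left 1).const_mul ε).symm
    rwa [sub_zero, sub_self, intervalIntegrable_iff_integrableOn_Ico_of_le zero_le_one] at h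
  · rw [tl_standardWeight hε]
    exact Real.rpow_pos_of_pos (sub_pos.2 hr.2) _

theorem ae_norm_mul_le_toReal_wSup {v : ℝ → ℝ} {f : ℂ → ℂ} (hf : wSup v f < ⊤) :
    ∀ᵐ z ∂volume.restrict unitDisc, ‖f z‖ * v ‖z‖ ≤ (wSup v f).toReal := by
  filter_upwards [ENNReal.ae_le_essSup (μ := volume.restrict unitDisc)
    fun z => ENNReal.ofReal (‖f z‖ * v ‖z‖)] with z hz
  exact (ENNReal.ofReal_le_iff_le_toReal hf.ne).1 hz

theorem IsRadialWeight.exists_projBddH {ω : ℝ → ℝ} (hω : IsRadialWeight ω) (hD : Dhat ω)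
    (hc : Dcheck ω) : ∃ ν : ℝ → ℝ, IsRadialWeight ν ∧ ProjBddH ω (tl ν) := by
  obtain ⟨ε, M, hε, hM, hbound⟩ := hω.exists_norm_bProj_le hD hc
  refine ⟨standardWeight ε, isRadialWeight_standardWeight hε, M, hM, fun f hfm hf => ?_⟩
  have hfbound : ∀ᵐ ζ ∂volume.restrict unitDisc,
      ‖f ζ‖ ≤ (wSup (tl (standardWeight ε)) f).toReal * (1 - ‖ζ‖) ^ (-ε) := by
    filter_upwards [ae_norm_mul_le_toReal_wSup hf, ae_restrict_mem measurableSet_unitDisc]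
      with ζ hfζ hζ
    have hζ1 : 0 < 1 - ‖ζ‖ := sub_pos.2 (mem_unitDisc.1 hζ)
    rwa [Real.rpow_neg hζ1.le, ← div_eq_mul_inv, le_div_iff₀ (Real.rpow_pos_of_pos hζ1 _),
      ← tl_standardWeight hε]
  obtain ⟨hint, hproj⟩ := hbound f _ ENNReal.toReal_nonneg hfm hfbound
  refine ⟨fun z hz => hω.integrableOn_bInt hint (mem_unitDisc.1 hz), fun z hz =>
    (hω.hasDerivAt_bProj hint (mem_unitDisc.1 hz)).differentiableAt.differentiableWithinAt,
    essSup_le_of_ae_le _ ?_⟩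
  filter_upwards [ae_restrict_mem measurableSet_unitDisc] with z hz
  have hz1 : 0 < 1 - ‖z‖ := sub_pos.2 (mem_unitDisc.1 hz)
  rw [tl_standardWeight hε]
  calc ENNReal.ofReal (‖bProj ω f z‖ * (1 - ‖z‖) ^ ε)
      ≤ ENNReal.ofReal (M * (wSup (tl (standardWeight ε)) f).toReal) := by
        refine ENNReal.ofReal_le_ofReal ?_
        rw [← le_div_iff₀ (Real.rpow_pos_of_pos hz1 _), div_eq_mul_inv, ← Real.rpow_neg hz1.le]
        exact hproj z (mem_unitDisc.1 hz)
    _ = ENNReal.ofReal M * wSup (tl (standardWeight ε)) f := by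
        rw [ENNReal.ofReal_mul hM.le, ENNReal.ofReal_toReal hf.ne]

/-! ### Necessity: the argument as a test function -/

theorem le_of_ae_le_unitDisc {g : ℂ → ℝ} (hg : ContinuousOn g unitDisc) {c : ℝ}
    (hle : ∀ᵐ z ∂volume.restrict unitDisc, g z ≤ c) {z : ℂ} (hz : z ∈ unitDisc) : g z ≤ c := by
  have hopen : IsOpen (unitDisc ∩ g ⁻¹' Ioi c) :=
    hg.isOpen_inter_preimage Metric.isOpen_ball isOpen_Ioi
  have hnull : volume (unitDisc ∩ g ⁻¹' Ioi c) = 0 := by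
    refine measure_mono_null (fun w hw => ?_) (ae_iff.1 ((ae_restrict_iff'
      measurableSet_unitDisc).1 hle))
    exact fun h => (h hw.1).not_gt hw.2
  by_contra hcon
  exact (hopen.eq_empty_of_measure_zero hnull).le ⟨hz, not_le.1 hcon⟩

-- At `n = 0` both sides vanish, the right one because `x / 0 = 0`.
theorem integral_mul_exp_neg_pow (n : ℕ) :
    ∫ θ in Ioo (-Real.pi) Real.pi, (θ : ℂ) * cexp (-(θ * I)) ^ n =
      2 * Real.pi * I * (-1) ^ n / n := by
  rw [← integral_Ioc_eq_integral_Ioo,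
    ← intervalIntegral.integral_of_le (neg_le_self Real.pi_pos.le)]
  rcases eq_or_ne n 0 with rfl | hn
  · simp only [pow_zero, mul_one, Nat.cast_zero, div_zero]
    rw [intervalIntegral.integral_ofReal, integral_id, neg_sq, sub_self, zero_div, ofReal_zero]
  have hn' : (n : ℂ) ≠ 0 := Nat.cast_ne_zero.2 hn
  have hderiv (θ : ℝ) : HasDerivAt (fun θ : ℝ => (I * θ / n + 1 / (n : ℂ) ^ 2) *
      cexp (-(n * I) * θ)) ((θ : ℂ) * cexp (-(θ * I)) ^ n) θ := by
    have hid : HasDerivAt (fun θ : ℝ => (θ : ℂ)) 1 θ := (hasDerivAt_id θ).ofReal_comp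
    refine ((((hid.const_mul I).div_const (n : ℂ)).add_const (1 / (n : ℂ) ^ 2)).mul
      (hid.const_mul (-((n : ℂ) * I))).cexp).congr_deriv ?_
    rw [← Complex.exp_nat_mul, show (n : ℂ) * -(θ * I) = -(n * I) * θ by ring]
    field_simp
    ring_nf
    rw [I_sq]
    ring
  have hpi : cexp (-(n * I) * (Real.pi : ℝ)) = (-1) ^ n := by
    rw [show -((n : ℂ) * I) * (Real.pi : ℝ) = n * -(Real.pi * I) by ring, Complex.exp_nat_mul,
      Complex.exp_neg, Complex.exp_pi_mul_I, inv_neg, inv_one]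
  have hneg_pi : cexp (-(n * I) * ((-Real.pi : ℝ) : ℂ)) = (-1) ^ n := by
    rw [ofReal_neg, neg_mul_neg, mul_assoc, mul_comm I, Complex.exp_nat_mul, Complex.exp_pi_mul_I]
  rw [intervalIntegral.integral_eq_sub_of_hasDerivAt (fun θ _ => hderiv θ)
    (Continuous.intervalIntegrable (by fun_prop) _ _), hpi, hneg_pi, ofReal_neg]
  field_simp
  ring

/-- The test function `arg ζ / ν̂(ζ)`: it is bounded in `L^∞_ν̂`, and the coefficients of its
projection at `-r` all have the same phase. -/
def argTest (ν : ℝ → ℝ) (ζ : ℂ) : ℂ := (arg ζ / tl ν ‖ζ‖ : ℝ)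

theorem argTest_ofReal_mul_exp {ν : ℝ → ℝ} {s θ : ℝ} (hs : 0 < s)
    (hθ : θ ∈ Ioo (-Real.pi) Real.pi) : argTest ν (s * cexp (θ * I)) = (θ / tl ν s : ℝ) := by
  rw [argTest, norm_ofReal_mul_exp_mul_I hs.le, Complex.arg_real_mul _ hs, Complex.arg_exp_mul_I,
    (toIocMod_eq_self _).2 ⟨hθ.1, by linarith [hθ.2]⟩]

theorem discMoment_argTest (ω ν : ℝ → ℝ) (n : ℕ) : discMoment ω (argTest ν) n =
    mom (fun s => ω s / tl ν s) (n + 1) * (2 * I * (-1) ^ n / n) := by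
  have hpolar : ∀ p ∈ Ioo (0 : ℝ) 1 ×ˢ Ioo (-Real.pi) Real.pi,
      (p.1 : ℂ) * (argTest ν (p.1 * cexp (p.2 * I)) * ω ‖(p.1 : ℂ) * cexp (p.2 * I)‖ *
        starRingEnd ℂ (p.1 * cexp (p.2 * I)) ^ n) =
      ((p.1 ^ ((n : ℝ) + 1) * (ω p.1 / tl ν p.1) : ℝ) : ℂ) *
        ((p.2 : ℂ) * cexp (-(p.2 * I)) ^ n) := by
    rintro ⟨s, θ⟩ ⟨hs, hθ⟩
    simp only at hs hθ ⊢
    rw [argTest_ofReal_mul_exp hs.1 hθ, norm_ofReal_mul_exp_mul_I hs.1.le, map_mul,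
      Complex.conj_ofReal, ← Complex.exp_conj, map_mul, Complex.conj_I, Complex.conj_ofReal,
      mul_neg, mul_pow, Real.rpow_add_one hs.1.ne', Real.rpow_natCast]
    push_cast
    ring
  rw [discMoment, integral_unitDisc_eq_polar,
    setIntegral_congr_fun (measurableSet_Ioo.prod measurableSet_Ioo) hpolar,
    Measure.volume_eq_prod,
    setIntegral_prod_mul (fun s : ℝ => ((s ^ ((n : ℝ) + 1) * (ω s / tl ν s) : ℝ) : ℂ))
      (fun θ : ℝ => (θ : ℂ) * cexp (-(θ * I)) ^ n),
    integral_mul_exp_neg_pow, integral_complex_ofReal, mom,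
    intervalIntegral.integral_of_le zero_le_one, integral_Ioc_eq_integral_Ioo]
  have hpi : (Real.pi : ℂ) ≠ 0 := ofReal_ne_zero.2 Real.pi_ne_zero
  field_simp

namespace IsRadialWeight

variable {ω ν : ℝ → ℝ}

theorem continuousOn_tl_norm (hν : IsRadialWeight ν) :
    ContinuousOn (fun ζ : ℂ => tl ν ‖ζ‖) unitDisc :=
  hν.continuousOn_tl.comp continuous_norm.continuousOn fun ζ hζ =>
    ⟨norm_nonneg ζ, (mem_unitDisc.1 hζ).le⟩

theorem aestronglyMeasurable_argTest (hν : IsRadialWeight ν) :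
    AEStronglyMeasurable (argTest ν) (volume.restrict unitDisc) :=
  Complex.continuous_ofReal.comp_aestronglyMeasurable
    (Complex.measurable_arg.aemeasurable.div
      (hν.continuousOn_tl_norm.aemeasurable measurableSet_unitDisc)).aestronglyMeasurable

theorem wSup_argTest_le (hν : IsRadialWeight ν) :
    wSup (tl ν) (argTest ν) ≤ ENNReal.ofReal Real.pi := by
  refine essSup_le_of_ae_le _ ?_
  filter_upwards [ae_restrict_mem measurableSet_unitDisc] with z hz
  have htl : 0 < tl ν ‖z‖ := hν.tl_pos ⟨norm_nonneg z, mem_unitDisc.1 hz⟩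
  rw [argTest, Complex.norm_real, norm_div, Real.norm_of_nonneg htl.le,
    div_mul_cancel₀ _ htl.ne']
  exact ENNReal.ofReal_le_ofReal (Complex.abs_arg_le_pi z)

theorem aemeasurable_div_tl (hω : IsRadialWeight ω) (hν : IsRadialWeight ν) :
    AEMeasurable (fun s => ω s / tl ν s) (volume.restrict (Ico 0 1)) :=
  hω.2.1.aemeasurable.div
    ((hν.continuousOn_tl.mono Ico_subset_Icc_self).aemeasurable measurableSet_Ico)

theorem integrableOn_mul_div_tl (hω : IsRadialWeight ω) (hν : IsRadialWeight ν)
    (hint : IntegrableOn (fun ζ => argTest ν ζ * ω ‖ζ‖) unitDisc) :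
    IntegrableOn (fun s => s * (ω s / tl ν s)) (Ico 0 1) := by
  have hmeas : AEMeasurable (fun s => s * (ω s / tl ν s)) (volume.restrict (Ioo 0 1)) :=
    (aemeasurable_id.mul (hω.aemeasurable_div_tl hν)).mono_measure
      (Measure.restrict_mono_set _ Ioo_subset_Ico_self)
  have hpolar : ∀ p ∈ Ioo (0 : ℝ) 1 ×ˢ Ioo (-Real.pi) Real.pi, ENNReal.ofReal p.1 *
      ENNReal.ofReal ‖argTest ν (p.1 * cexp (p.2 * I)) * ω ‖(p.1 : ℂ) * cexp (p.2 * I)‖‖ =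
        ENNReal.ofReal ‖p.1 * (ω p.1 / tl ν p.1)‖ * ENNReal.ofReal ‖p.2‖ := by
    rintro ⟨s, θ⟩ ⟨hs, hθ⟩
    simp only at hs hθ ⊢
    rw [argTest_ofReal_mul_exp hs.1 hθ, norm_ofReal_mul_exp_mul_I hs.1.le, ← ofReal_mul,
      Complex.norm_real, ← ENNReal.ofReal_mul hs.1.le, ← ENNReal.ofReal_mul (norm_nonneg _),
      ← norm_mul]
    nth_rw 1 [← Real.norm_of_nonneg hs.1.le]
    rw [← norm_mul]
    congr 2
    ring
  have hfinite := hint.2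
  rw [hasFiniteIntegral_iff_norm, lintegral_unitDisc_eq_polar,
    setLIntegral_congr_fun (measurableSet_Ioo.prod measurableSet_Ioo) hpolar,
    Measure.volume_eq_prod, ← Measure.prod_restrict,
    lintegral_prod_mul (f := fun s : ℝ => ENNReal.ofReal ‖s * (ω s / tl ν s)‖)
      (g := fun θ : ℝ => ENNReal.ofReal ‖θ‖) hmeas.norm.ennreal_ofReal (by fun_prop)] at hfinite
  have hangle : ∫⁻ θ in Ioo (-Real.pi) Real.pi, ENNReal.ofReal ‖θ‖ ≠ 0 := by
    refine ((setLIntegral_pos_iff (by fun_prop)).2 (lt_of_lt_of_le ?_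
      (measure_mono (s := Ioo 0 Real.pi) fun θ hθ => ⟨?_, ?_⟩))).ne'
    · simpa only [Real.volume_Ioo, sub_zero, ENNReal.ofReal_pos] using Real.pi_pos
    · exact (ENNReal.ofReal_pos.2 (norm_pos_iff.2 hθ.1.ne')).ne'
    · exact ⟨(neg_neg_of_pos Real.pi_pos).trans hθ.1, hθ.2⟩
  rw [integrableOn_Ico_iff_integrableOn_Ioo]
  exact ⟨hmeas.aestronglyMeasurable, (hasFiniteIntegral_iff_norm _).2
    (lt_top_iff_ne_top.2 fun htop => hfinite.ne (by rw [htop, ENNReal.top_mul hangle]))⟩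

theorem div_tl_le_div_tl (hω : IsRadialWeight ω) (hν : IsRadialWeight ν) {r s : ℝ}
    (hr : r ∈ Ico (0 : ℝ) 1) (hs : s ∈ Ico (0 : ℝ) 1) (hrs : r ≤ s) :
    ω s / tl ν r ≤ ω s / tl ν s :=
  div_le_div_of_nonneg_left (hω.nonneg hs) (hν.tl_pos hs)
    (hν.tl_antitoneOn (Ico_subset_Icc_self hr) (Ico_subset_Icc_self hs) hrs)

theorem integrableOn_div_tl (hω : IsRadialWeight ω) (hν : IsRadialWeight ν)
    (hint : IntegrableOn (fun ζ => argTest ν ζ * ω ‖ζ‖) unitDisc) :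
    IntegrableOn (fun s => ω s / tl ν s) (Ico 0 1) := by
  refine Integrable.mono' ((hω.2.1.div_const (tl ν (1 / 2))).add
    ((hω.integrableOn_mul_div_tl hν hint).const_mul 2))
    (hω.aemeasurable_div_tl hν).aestronglyMeasurable ?_
  filter_upwards [ae_restrict_mem measurableSet_Ico] with s hs
  have hhalf : (1 / 2 : ℝ) ∈ Ico (0 : ℝ) 1 := by norm_num
  have hωs := hω.nonneg hs
  have htl := hν.tl_pos hs
  have htl_half := hν.tl_pos hhalf
  rw [Real.norm_of_nonneg (by positivity), Pi.add_apply]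
  rcases le_total s (1 / 2) with hle | hle
  · exact (div_le_div_of_nonneg_left hωs htl_half
      (hν.tl_antitoneOn (Ico_subset_Icc_self hs) (Ico_subset_Icc_self hhalf) hle)).trans
        (le_add_of_nonneg_right (mul_nonneg zero_le_two (mul_nonneg hs.1 (by positivity))))
  · rw [← mul_assoc]
    exact (le_mul_of_one_le_left (by positivity) (by linarith)).trans
      (le_add_of_nonneg_left (by positivity))

theorem tl_div_tl_le_tl_div_tl (hω : IsRadialWeight ω) (hν : IsRadialWeight ν)
    (hint : IntegrableOn (fun s => ω s / tl ν s) (Ico 0 1)) {r : ℝ} (hr : r ∈ Ico (0 : ℝ) 1) :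
    tl ω r / tl ν r ≤ tl (fun s => ω s / tl ν s) r := by
  have hint_r : IntervalIntegrable (fun s => ω s / tl ν s) volume r 1 :=
    (intervalIntegrable_iff_integrableOn_Ico_of_le hr.2.le).2
      (hint.mono_set (Ico_subset_Ico_left hr.1))
  rw [tl, ← intervalIntegral.integral_div]
  exact intervalIntegral.integral_mono_on_of_le_Ioo hr.2.le
    ((hω.intervalIntegrable (Ico_subset_Icc_self hr) ⟨zero_le_one, le_rfl⟩).div_const _) hint_r
    fun s hs => hω.div_tl_le_div_tl hν hr ⟨hr.1.trans hs.1.le, hs.2⟩ hs.1.le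

theorem div_tl (hω : IsRadialWeight ω) (hν : IsRadialWeight ν)
    (hint : IntegrableOn (fun ζ => argTest ν ζ * ω ‖ζ‖) unitDisc) :
    IsRadialWeight fun s => ω s / tl ν s :=
  ⟨fun _ hs => div_nonneg (hω.nonneg hs) (hν.tl_pos hs).le, hω.integrableOn_div_tl hν hint,
    fun _ hr => (div_pos (hω.tl_pos hr) (hν.tl_pos hr)).trans_le
      (hω.tl_div_tl_le_tl_div_tl hν (hω.integrableOn_div_tl hν hint) hr)⟩

theorem hasSum_bProj_argTest_neg (hω : IsRadialWeight ω)
    (hint : IntegrableOn (fun ζ => argTest ν ζ * ω ‖ζ‖) unitDisc) {r : ℝ}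
    (hr : r ∈ Ico (0 : ℝ) 1) :
    HasSum (fun n : ℕ => r ^ n * mom (fun s => ω s / tl ν s) (n + 1) / (n * mom ω (2 * n + 1)))
      (-I * bProj ω (argTest ν) (-r)).re := by
  have hnorm : ‖(-r : ℂ)‖ < 1 := by rw [norm_neg, Complex.norm_of_nonneg hr.1]; exact hr.2
  have hsum := Complex.hasSum_re ((hω.hasSum_bProj hint hnorm).mul_left (-I))
  refine hsum.congr_fun fun n => ?_
  have hphase : (-1 : ℂ) ^ n * (-1) ^ n = 1 := by rw [← mul_pow, neg_one_mul, neg_neg, one_pow]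
  have hterm : -I * (bergmanCoeff ω n * discMoment ω (argTest ν) n * (-r : ℂ) ^ n) =
      ((r ^ n * mom (fun s => ω s / tl ν s) (n + 1) / (n * mom ω (2 * n + 1)) : ℝ) : ℂ) := by
    have : mom ω (2 * n + 1) ≠ 0 := (hω.mom_pos (by positivity)).ne'
    rw [discMoment_argTest, neg_pow (r : ℂ)]
    calc -I * (bergmanCoeff ω n * (mom (fun s => ω s / tl ν s) (n + 1) * (2 * I * (-1) ^ n / n)) *
          ((-1) ^ n * (r : ℂ) ^ n))
        = -(I * I) * ((-1) ^ n * (-1) ^ n) * (bergmanCoeff ω n *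
            mom (fun s => ω s / tl ν s) (n + 1) * 2 / n * (r : ℂ) ^ n) := by ring
      _ = _ := by
        rw [hphase, I_mul_I, bergmanCoeff]
        push_cast
        field_simp
  rw [hterm, ofReal_re]

theorem sum_mul_tl_le_norm_bProj_argTest (hω : IsRadialWeight ω) (hν : IsRadialWeight ν)
    (hint : IntegrableOn (fun ζ => argTest ν ζ * ω ‖ζ‖) unitDisc) {r : ℝ}
    (hr : r ∈ Ico (0 : ℝ) 1) (s : Finset ℕ) :
    (∑ n ∈ s, r ^ (2 * n + 1) / (n * mom ω (2 * n + 1))) * tl ω r ≤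
      ‖bProj ω (argTest ν) (-r)‖ * tl ν r := by
  have htl : 0 < tl ν r := hν.tl_pos hr
  have hweight : IsRadialWeight fun s => ω s / tl ν s := hω.div_tl hν hint
  have hmom (n : ℕ) : 0 < mom ω (2 * n + 1) := hω.mom_pos (by positivity)
  have hterm (n : ℕ) : r ^ (2 * n + 1) / (n * mom ω (2 * n + 1)) * (tl ω r / tl ν r) ≤
      r ^ n * mom (fun s => ω s / tl ν s) (n + 1) / (n * mom ω (2 * n + 1)) := by
    have h := hweight.rpow_mul_tl_le_mom (x := n + 1) (by positivity) (Ico_subset_Icc_self hr)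
    rw [← Nat.cast_add_one, Real.rpow_natCast, Nat.cast_add_one] at h
    rw [div_mul_eq_mul_div, two_mul, add_assoc, pow_add, mul_assoc]
    have := (hmom n).le
    have := pow_nonneg hr.1 n
    have := pow_nonneg hr.1 (n + 1)
    gcongr
    exact (mul_le_mul_of_nonneg_left (hω.tl_div_tl_le_tl_div_tl hν hweight.2.1 hr) this).trans h
  have hnonneg (n : ℕ) :
      0 ≤ r ^ n * mom (fun s => ω s / tl ν s) (n + 1) / (n * mom ω (2 * n + 1)) :=
    div_nonneg (mul_nonneg (pow_nonneg hr.1 n) (hweight.mom_pos (by positivity)).le)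
      (mul_nonneg n.cast_nonneg (hmom n).le)
  rw [← div_le_iff₀ htl, mul_div_assoc, Finset.sum_mul]
  calc ∑ n ∈ s, r ^ (2 * n + 1) / (n * mom ω (2 * n + 1)) * (tl ω r / tl ν r)
      ≤ (-I * bProj ω (argTest ν) (-r)).re := (Finset.sum_le_sum fun n _ => hterm n).trans
        (sum_le_hasSum s (fun n _ => hnonneg n) (hω.hasSum_bProj_argTest_neg hint hr))
    _ ≤ ‖bProj ω (argTest ν) (-r)‖ := by
        refine (Complex.re_le_norm _).trans_eq ?_
        rw [norm_mul, norm_neg, norm_I, one_mul]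

theorem exists_sum_mul_tl_le (hω : IsRadialWeight ω) (hν : IsRadialWeight ν)
    (hP : ProjBddH ω (tl ν)) :
    ∃ Q : ℝ, 0 < Q ∧ ∀ r ∈ Ico (0 : ℝ) 1, ∀ s : Finset ℕ,
      (∑ n ∈ s, r ^ (2 * n + 1) / (n * mom ω (2 * n + 1))) * tl ω r ≤ Q := by
  obtain ⟨C, hC, hP⟩ := hP
  obtain ⟨hker, hdiff, hbound⟩ := hP (argTest ν) hν.aestronglyMeasurable_argTest
    (hν.wSup_argTest_le.trans_lt ENNReal.ofReal_lt_top)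
  have hint := hω.integrableOn_of_integrableOn_bInt_zero (hker 0 zero_mem_unitDisc)
  have hwSup : wSup (tl ν) (bProj ω (argTest ν)) ≤ ENNReal.ofReal (C * Real.pi) := by
    rw [ENNReal.ofReal_mul hC.le]
    exact hbound.trans (mul_le_mul_right hν.wSup_argTest_le _)
  have hae : ∀ᵐ z ∂volume.restrict unitDisc,
      ‖bProj ω (argTest ν) z‖ * tl ν ‖z‖ ≤ C * Real.pi :=
    (ae_norm_mul_le_toReal_wSup (hwSup.trans_lt ENNReal.ofReal_lt_top)).mono fun z hz =>
      hz.trans (ENNReal.toReal_le_of_le_ofReal (by positivity) hwSup)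
  refine ⟨C * Real.pi, by positivity, fun r hr s => ?_⟩
  have hnorm : ‖(-r : ℂ)‖ = r := by rw [norm_neg, Complex.norm_of_nonneg hr.1]
  have hpoint : ‖bProj ω (argTest ν) (-r)‖ * tl ν ‖(-r : ℂ)‖ ≤ C * Real.pi :=
    le_of_ae_le_unitDisc (hdiff.continuousOn.norm.mul hν.continuousOn_tl_norm) hae
      (mem_unitDisc.2 (hnorm.trans_lt hr.2))
  rw [hnorm] at hpoint
  exact (hω.sum_mul_tl_le_norm_bProj_argTest hν hint hr s).trans hpoint

end IsRadialWeight

/-! ### Necessity: harmonic blocks -/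

theorem half_le_sum_one_div {M : ℕ} (hM : 1 ≤ M) (j : ℕ) :
    (j : ℝ) / 2 ≤ ∑ n ∈ Finset.Ico M (2 ^ j * M), 1 / (n : ℝ) := by
  induction j with
  | zero => simp only [Nat.cast_zero, zero_div, pow_zero, one_mul, Finset.Ico_self,
      Finset.sum_empty, le_refl]
  | succ j ih =>
    have hpos : 0 < 2 ^ j * M := by positivity
    have hle : 2 ^ j * M ≤ 2 ^ (j + 1) * M := by gcongr <;> omega
    have hblock : (1 / 2 : ℝ) ≤ ∑ n ∈ Finset.Ico (2 ^ j * M) (2 ^ (j + 1) * M), 1 / (n : ℝ) := by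
      refine le_trans (le_of_eq ?_) (Finset.card_nsmul_le_sum _ _
        (1 / ((2 ^ (j + 1) * M : ℕ) : ℝ)) fun n hn => ?_)
      · rw [Nat.card_Ico, nsmul_eq_mul, Nat.cast_sub hle]
        push_cast
        field_simp
        ring
      · obtain ⟨hn, hn'⟩ := Finset.mem_Ico.1 hn
        exact one_div_le_one_div_of_le (Nat.cast_pos.2 (hpos.trans_le hn))
          (Nat.cast_le.2 hn'.le)
    rw [← Finset.sum_Ico_consecutive _ (Nat.le_mul_of_pos_left M (by positivity)) hle]
    push_cast
    linarith

theorem one_half_le_one_sub_pow {N : ℕ} (hN : 1 ≤ N) {k : ℕ} (hk : k ≤ 2 * N) :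
    (1 / 2 : ℝ) ≤ (1 - 1 / (4 * N)) ^ k := by
  have hN' : (1 : ℝ) ≤ N := Nat.one_le_cast.2 hN
  have hsmall : 1 / (4 * N : ℝ) ≤ 1 := (div_le_one (by positivity)).2 (by linarith)
  have hbernoulli := one_add_mul_le_pow (a := -(1 / (4 * N : ℝ))) (by linarith) (2 * N)
  calc (1 / 2 : ℝ) = 1 + (2 * N : ℕ) * -(1 / (4 * N : ℝ)) := by
        push_cast
        field_simp
        ring
    _ ≤ (1 - 1 / (4 * N)) ^ (2 * N) := by rwa [← sub_eq_add_neg] at hbernoulli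
    _ ≤ (1 - 1 / (4 * N)) ^ k :=
        pow_le_pow_of_le_one (by linarith) (by linarith [show (0 : ℝ) ≤ 1 / (4 * N) by positivity])
          hk

namespace IsRadialWeight

variable {ω ν : ℝ → ℝ}

theorem mom_two_mul_add_one_le (hω : IsRadialWeight ω) {A : ℝ} (hA : 0 < A)
    (hmom : ∀ x : ℝ, 1 ≤ x → mom ω x ≤ A * tl ω (1 - 1 / x)) {M n : ℕ} (hM : 1 ≤ M)
    (hMn : M ≤ n) : mom ω (2 * n + 1) ≤ A * tl ω (1 - 1 / M) := by
  have hM' : (1 : ℝ) ≤ M := Nat.one_le_cast.2 hM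
  have hMn' : (M : ℝ) ≤ n := Nat.cast_le.2 hMn
  calc mom ω (2 * n + 1) ≤ mom ω n := hω.mom_le_mom n.cast_nonneg (by linarith)
    _ ≤ A * tl ω (1 - 1 / n) := hmom n (hM'.trans hMn')
    _ ≤ A * tl ω (1 - 1 / M) := by
        gcongr
        exact hω.tl_antitoneOn (Ico_subset_Icc_self (one_sub_one_div_mem_Ico hM'))
          (Ico_subset_Icc_self (one_sub_one_div_mem_Ico (hM'.trans hMn'))) (by gcongr)

theorem mul_tl_le_of_sum_mul_tl_le (hω : IsRadialWeight ω) {A Q : ℝ} (hA : 0 < A)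
    (hmom : ∀ x : ℝ, 1 ≤ x → mom ω x ≤ A * tl ω (1 - 1 / x))
    (hsum : ∀ r ∈ Ico (0 : ℝ) 1, ∀ s : Finset ℕ,
      (∑ n ∈ s, r ^ (2 * n + 1) / (n * mom ω (2 * n + 1))) * tl ω r ≤ Q)
    {M : ℕ} (hM : 1 ≤ M) (j : ℕ) :
    j * tl ω (1 - 1 / (4 * (2 ^ j * M))) ≤ 4 * A * Q * tl ω (1 - 1 / M) := by
  have hM' : (1 : ℝ) ≤ M := Nat.one_le_cast.2 hM
  have hN : 1 ≤ 2 ^ j * M := Nat.one_le_iff_ne_zero.2 (by positivity)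
  have hr : 1 - 1 / (4 * (2 ^ j * M) : ℝ) ∈ Ico (0 : ℝ) 1 :=
    one_sub_one_div_mem_Ico (by
      have : (1 : ℝ) ≤ 2 ^ j * M := by exact_mod_cast hN
      linarith)
  set r : ℝ := 1 - 1 / (4 * (2 ^ j * M))
  have htlM : 0 < tl ω (1 - 1 / M) := hω.tl_pos (one_sub_one_div_mem_Ico hM')
  have hterm : ∀ n ∈ Finset.Ico M (2 ^ j * M), 1 / (n : ℝ) * (1 / (2 * (A * tl ω (1 - 1 / M)))) ≤
      r ^ (2 * n + 1) / (n * mom ω (2 * n + 1)) := by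
    intro n hn
    obtain ⟨hMn, hnN⟩ := Finset.mem_Ico.1 hn
    have hmom_pos : 0 < mom ω (2 * n + 1) := hω.mom_pos (by positivity)
    have hn_pos : (0 : ℝ) < n := Nat.cast_pos.2 (hM.trans hMn)
    have hpow : 1 / 2 ≤ r ^ (2 * n + 1) := by
      have h := one_half_le_one_sub_pow hN (k := 2 * n + 1) (by omega)
      push_cast at h
      exact h
    calc 1 / (n : ℝ) * (1 / (2 * (A * tl ω (1 - 1 / M))))
        = (1 / 2) / (n * (A * tl ω (1 - 1 / M))) := by field_simp
      _ ≤ r ^ (2 * n + 1) / (n * mom ω (2 * n + 1)) := by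
          have := hω.mom_two_mul_add_one_le hA hmom hM hMn
          gcongr
  have hlower : (j : ℝ) / 2 * (1 / (2 * (A * tl ω (1 - 1 / M)))) * tl ω r ≤ Q := by
    refine le_trans ?_ (hsum r hr (Finset.Ico M (2 ^ j * M)))
    gcongr
    · exact (hω.tl_pos hr).le
    · refine le_trans ?_ (Finset.sum_le_sum hterm)
      rw [← Finset.sum_mul]
      gcongr
      exact half_le_sum_one_div hM j
  rw [mul_one_div, div_div, div_mul_eq_mul_div, div_le_iff₀ (by positivity)] at hlower
  linarith

theorem dcheck_of_forall_nat (hω : IsRadialWeight ω) {j : ℕ}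
    (h : ∀ M : ℕ, 1 ≤ M → 2 * tl ω (1 - 1 / (4 * (2 ^ j * M))) ≤ tl ω (1 - 1 / M)) :
    Dcheck ω := by
  have hj : (1 : ℝ) ≤ 2 ^ j := one_le_pow₀ one_le_two
  refine ⟨8 * 2 ^ j, 2, by linarith, one_lt_two, fun r hr => ?_⟩
  have hd : 0 < 1 - r := sub_pos.2 hr.2
  have hd1 : 1 - r ≤ 1 := sub_le_self 1 hr.1
  set M : ℕ := ⌈1 / (1 - r)⌉₊
  have hM : 1 / (1 - r) ≤ M := Nat.le_ceil _
  have hinv : 1 ≤ 1 / (1 - r) := (one_le_div hd).2 hd1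
  have hM1 : (1 : ℝ) ≤ M := hinv.trans hM
  have hM2 : M ≤ 2 / (1 - r) := by
    have h := (Nat.ceil_lt_add_one (zero_le_one.trans hinv)).le
    rw [← one_add_one_eq_two, add_div]
    linarith
  have hleft : r ≤ 1 - 1 / M := by
    have := (one_div_le hd (by linarith)).1 hM
    linarith
  have hright : 1 - 1 / (4 * (2 ^ j * M)) ≤ 1 - (1 - r) / (8 * 2 ^ j) := by
    rw [le_div_iff₀ hd] at hM2
    rw [sub_le_sub_iff_left, div_le_div_iff₀ (by positivity) (by positivity)]
    calc (1 - r) * (4 * (2 ^ j * M)) = 4 * 2 ^ j * (M * (1 - r)) := by ring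
      _ ≤ 4 * 2 ^ j * 2 := by gcongr
      _ = 1 * (8 * 2 ^ j) := by ring
  have hM4 : (1 : ℝ) ≤ 4 * (2 ^ j * M) := by nlinarith
  calc 2 * tl ω (1 - (1 - r) / (8 * 2 ^ j)) ≤ 2 * tl ω (1 - 1 / (4 * (2 ^ j * M))) := by
        gcongr
        exact hω.tl_antitoneOn (Ico_subset_Icc_self (one_sub_one_div_mem_Ico hM4))
          (Ico_subset_Icc_self (one_sub_div_mem_Ico hd hd1 (by linarith))) hright
    _ ≤ tl ω (1 - 1 / M) := h M (Nat.one_le_cast.1 hM1)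
    _ ≤ tl ω r := hω.tl_antitoneOn (Ico_subset_Icc_self hr)
        (Ico_subset_Icc_self (one_sub_one_div_mem_Ico hM1)) hleft

theorem dcheck_of_projBddH (hω : IsRadialWeight ω) (hν : IsRadialWeight ν) (hD : Dhat ω)
    (hP : ProjBddH ω (tl ν)) : Dcheck ω := by
  obtain ⟨A, hA, hmom⟩ := hω.exists_mom_le_of_dhat hD
  obtain ⟨Q, hQ, hsum⟩ := hω.exists_sum_mul_tl_le hν hP
  obtain ⟨j, hj⟩ := exists_nat_ge (8 * A * Q)
  refine hω.dcheck_of_forall_nat (j := j) fun M hM => ?_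
  have hM' : (1 : ℝ) ≤ 4 * (2 ^ j * M) := by
    have : (1 : ℝ) ≤ 2 ^ j * M := by exact_mod_cast Nat.one_le_iff_ne_zero.2 (by positivity)
    linarith
  have htl : 0 < tl ω (1 - 1 / (4 * (2 ^ j * M))) := hω.tl_pos (one_sub_one_div_mem_Ico hM')
  have hblock := hω.mul_tl_le_of_sum_mul_tl_le hA hmom hsum hM j
  refine le_of_mul_le_mul_left ?_ (by positivity : 0 < 4 * A * Q)
  calc 4 * A * Q * (2 * tl ω (1 - 1 / (4 * (2 ^ j * M))))
      = 8 * A * Q * tl ω (1 - 1 / (4 * (2 ^ j * M))) := by ring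
    _ ≤ j * tl ω (1 - 1 / (4 * (2 ^ j * M))) := by gcongr
    _ ≤ 4 * A * Q * tl ω (1 - 1 / M) := hblock

end IsRadialWeight

/-- Corollary: for `ω ∈ D̂`, there exists a radial weight `ν` with
`P_ω : L^∞_ν̂ → H^∞_ν̂` bounded iff `ω ∈ Ď`; in particular, if `ω ∈ D̂ \ Ď`,
no radial weight `ν` gives a bounded projection. -/
theorem stmt3 (ω : ℝ → ℝ) (hω : IsRadialWeight ω) (hωD : Dhat ω) :
    ((∃ ν : ℝ → ℝ, IsRadialWeight ν ∧ ProjBddH ω (tl ν)) ↔ Dcheck ω) ∧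
    (¬ Dcheck ω → ∀ ν : ℝ → ℝ, IsRadialWeight ν → ¬ ProjBddH ω (tl ν)) := by
  exact ⟨⟨fun ⟨_, hν, hP⟩ => hω.dcheck_of_projBddH hν hωD hP, hω.exists_projBddH hωD⟩,
    fun hc _ hν hP => hc (hω.dcheck_of_projBddH hν hωD hP)⟩
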